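/- Let C be a quasiminimal pregeometry class. Any two structures in C of the same uncountable cardinality are isomorphic as L-structures. -/

import Mathlib

open FirstOrder FirstOrder.Language Set Cardinal



universe u u' v w

namespace QM

variable {L : FirstOrder.Language.{v, w}}

/-- Formulas of `L_{ω₁,ω}`: built from atomic formulas by negation, countable
conjunction (indexed by `ℕ`), and universal quantification; `α` is the type of free
variables and `n` counts the de Bruijn bound variables. Countable disjunctions and
the existential quantifier are definable via negation. -/
inductive InfFormula (L : FirstOrder.Language.{v, w}) (α : Type u) : ℕ → Type (max u v w)
  | falsum {n : ℕ} : InfFormula L α n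
  | equal {n : ℕ} (t₁ t₂ : L.Term (α ⊕ (Fin n))) : InfFormula L α n
  | rel {n l : ℕ} (R : L.Relations l) (ts : Fin l → L.Term (α ⊕ (Fin n))) : InfFormula L α n
  | not {n : ℕ} (φ : InfFormula L α n) : InfFormula L α n
  | iInf {n : ℕ} (φ : ℕ → InfFormula L α n) : InfFormula L α n
  | all {n : ℕ} (φ : InfFormula L α (n + 1)) : InfFormula L α n

/-- Satisfaction of an `L_{ω₁,ω}`-formula in an `L`-structure `M`, given an
assignment `v` of the free variables and `xs` of the bound variables. -/
def InfFormula.Realize {M : Type u'} [L.Structure M] {α : Type u} :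
    ∀ {n : ℕ}, InfFormula L α n → (α → M) → (Fin n → M) → Prop
  | _, .falsum, _, _ => False
  | _, .equal t₁ t₂, v, xs => t₁.realize (Sum.elim v xs) = t₂.realize (Sum.elim v xs)
  | _, .rel R ts, v, xs => Structure.RelMap R (fun i => (ts i).realize (Sum.elim v xs))
  | _, .not φ, v, xs => ¬ φ.Realize v xs
  | _, .iInf φ, v, xs => ∀ i : ℕ, (φ i).Realize v xs
  | _, .all φ, v, xs => ∀ x : M, φ.Realize v (Fin.snoc xs x)

/-- An `L_{ω₁,ω}`-sentence. -/
abbrev InfSentence (L : FirstOrder.Language.{v, w}) := InfFormula L PEmpty 0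

/-- Satisfaction of an `L_{ω₁,ω}`-sentence. -/
def InfSentence.RealizeS (M : Type u') [L.Structure M] (φ : InfSentence L) : Prop :=
  InfFormula.Realize (M := M) φ PEmpty.elim (fun i => i.elim0)

/-- Satisfaction of an `L_{ω₁,ω}`-formula with parameters from the set `A`
and `m` free variables `v̄`, at the tuple `v`. -/
def InfFormula.RealizeP {M : Type u'} [L.Structure M] {A : Set M} {m : ℕ}
    (φ : InfFormula L (↥A ⊕ Fin m) 0) (v : Fin m → M) : Prop :=
  φ.Realize (Sum.elim Subtype.val v) (fun i => i.elim0)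

/-- The domain of a partial map, viewed as a graph (set of pairs). -/
def pdom {H : Type*} {H' : Type*} (p : Set (H × H')) : Set H := Prod.fst '' p

/-- The image of a partial map, viewed as a graph (set of pairs). -/
def pimg {H : Type*} {H' : Type*} (p : Set (H × H')) : Set H' := Prod.snd '' p

/-- The image of a set `X` under a partial map given as a graph. -/
def pimage {H : Type*} {H' : Type*} (p : Set (H × H')) (X : Set H) : Set H' :=
  {b | ∃ a ∈ X, (a, b) ∈ p}

/-- A partial map (given as its graph `p`) is a partial embedding if it preserves
quantifier-free first-order formulas. (This forces `p` to be the graph of an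
injective partial function.) -/
def IsPartialEmbedding {H : Type u} {H' : Type u} [L.Structure H] [L.Structure H']
    (p : Set (H × H')) : Prop :=
  ∀ (n : ℕ) (φ : L.Formula (Fin n)), BoundedFormula.IsQF φ →
    ∀ (a : Fin n → H) (b : Fin n → H'), (∀ i, (a i, b i) ∈ p) →
      (φ.Realize a ↔ φ.Realize b)

/-- A partial map is a σ-embedding if it is a partial embedding and preserves all
`L_{ω₁,ω}`-formulas with (possibly infinitely many) parameters from its domain;
equivalently `⟨M, m⟩_{m ∈ dom p} ≡_{ω₁,ω} ⟨N, p(m)⟩_{m ∈ dom p}`. -/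
def IsSigmaEmbedding {H : Type u} {H' : Type u} [L.Structure H] [L.Structure H']
    (p : Set (H × H')) : Prop :=
  IsPartialEmbedding (L := L) p ∧
    ∀ (φ : InfFormula L (↥(pdom p)) 0) (b : ↥(pdom p) → H'),
      (∀ x : ↥(pdom p), ((x : H), b x) ∈ p) →
        (φ.Realize Subtype.val (fun i => i.elim0) ↔ φ.Realize b (fun i => i.elim0))

/-- A pregeometry (combinatorial geometry) on a set. -/
structure IsPregeometry {α : Type*} (cl : Set α → Set α) : Prop where
  subset_cl : ∀ X, X ⊆ cl X
  mono : ∀ ⦃X Y : Set α⦄, X ⊆ Y → cl X ⊆ cl Y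
  idem : ∀ X, cl (cl X) = cl X
  finChar : ∀ (X : Set α) (y : α), y ∈ cl X → ∃ F : Finset α, ↑F ⊆ X ∧ y ∈ cl ↑F
  exchange : ∀ (X : Set α) (a b : α), a ∈ cl (X ∪ {b}) → a ∉ cl X → b ∈ cl (X ∪ {a})

/-- A pair `⟨H, cl_H⟩` of an `L`-structure and a closure operator on it. -/
structure QMObj (L : FirstOrder.Language.{v, w}) where
  carrier : Type u
  [str : L.Structure carrier]
  cl : Set carrier → Set carrier

attribute [instance] QMObj.str

/-- `G` is countable and closed, or empty. -/
def CCOE (H : QMObj.{u} L) (G : Set H.carrier) : Prop :=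
  (G.Countable ∧ H.cl G = G) ∨ G = ∅

/-- The axioms for a class of pairs `⟨H, cl_H⟩` to be a quasiminimal pregeometry class. -/
structure IsQMClass (C : Set (QMObj.{u} L)) : Prop where
  /-- Closure under isomorphisms, transporting the closure operator. -/
  iso_closed : ∀ H ∈ C, ∀ (N : Type u) [_iN : L.Structure N] (f : H.carrier ≃[L] N),
      (⟨N, fun X => f '' (H.cl (f ⁻¹' X))⟩ : QMObj L) ∈ C
  /-- Any two members satisfy the same quantifier-free sentences. -/
  qf_theory : ∀ H ∈ C, ∀ H' ∈ C, ∀ (φ : L.Sentence), BoundedFormula.IsQF φ →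
      (H.carrier ⊨ φ ↔ H'.carrier ⊨ φ)
  /-- Each `cl_H` is a pregeometry. -/
  pregeom : ∀ H ∈ C, IsPregeometry H.cl
  /-- The closure of a finite set is countable. -/
  cl_finite_countable : ∀ H ∈ C, ∀ X : Set H.carrier, X.Finite → (H.cl X).Countable
  /-- The closure of any set is (the underlying set of) a substructure which, with the
  restricted closure operator, is again a member of the class. -/
  cl_mem : ∀ H ∈ C, ∀ X : Set H.carrier, ∃ S : L.Substructure H.carrier,
      (S : Set H.carrier) = H.cl X ∧
      (⟨↥S, fun Y => Subtype.val ⁻¹' (H.cl (Subtype.val '' Y))⟩ : QMObj L) ∈ C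
  /-- Partial embeddings preserve and reflect the closure relation. -/
  cl_embedding : ∀ H ∈ C, ∀ H' ∈ C, ∀ (p : Set (H.carrier × H'.carrier)),
      IsPartialEmbedding (L := L) p → ∀ X ⊆ pdom p, ∀ (y : H.carrier) (y' : H'.carrier),
        (y, y') ∈ p → (y ∈ H.cl X ↔ y' ∈ H'.cl (pimage p X))
  /-- ℵ₀-homogeneity over countable closed models, part (i): an isomorphism between
  countable closed (or empty) sets extends by any pair of independent points. -/
  homogeneity₁ : ∀ H ∈ C, ∀ H' ∈ C, ∀ (g : Set (H.carrier × H'.carrier)),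
      CCOE H (pdom g) → CCOE H' (pimg g) → IsPartialEmbedding (L := L) g →
      ∀ (x : H.carrier) (x' : H'.carrier), x ∉ H.cl (pdom g) → x' ∉ H'.cl (pimg g) →
        IsPartialEmbedding (L := L) (g ∪ {(x, x')})
  /-- ℵ₀-homogeneity over countable closed models, part (ii). -/
  homogeneity₂ : ∀ H ∈ C, ∀ H' ∈ C, ∀ (g f : Set (H.carrier × H'.carrier)),
      CCOE H (pdom g) → CCOE H' (pimg g) → IsPartialEmbedding (L := L) g →
      (pdom f).Finite → IsPartialEmbedding (L := L) (g ∪ f) →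
      ∀ y ∈ H.cl (pdom f ∪ pdom g), ∃ y' : H'.carrier,
        IsPartialEmbedding (L := L) (g ∪ f ∪ {(y, y')})


/-- `p` is a σ-type over `A` in `m` variables: every countable subset of `p` is
consistent with the structure, i.e. simultaneously satisfiable. -/
def IsSigmaType {M : Type u'} [L.Structure M] {A : Set M} {m : ℕ}
    (p : Set (InfFormula L (↥A ⊕ Fin m) 0)) : Prop :=
  ∀ Φ ⊆ p, Φ.Countable → ∃ v : Fin m → M, ∀ φ ∈ Φ, φ.RealizeP v

/-- A σ-type `p` is isolated if there is a consistent `L_{ω₁,ω}`-formula `ψ(x̄)`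
(possibly with parameters from `M`) such that `ψ` implies every formula of `p`. -/
def IsIsolated {M : Type u'} [L.Structure M] {A : Set M} {m : ℕ}
    (p : Set (InfFormula L (↥A ⊕ Fin m) 0)) : Prop :=
  ∃ ψ : InfFormula L (M ⊕ Fin m) 0,
    (∃ v : Fin m → M, ψ.Realize (Sum.elim id v) (fun i => i.elim0)) ∧
    ∀ φ ∈ p, ∀ v : Fin m → M, ψ.Realize (Sum.elim id v) (fun i => i.elim0) → φ.RealizeP v

/-- A σ-type `p` is realised if some tuple satisfies every formula of `p`. -/
def IsRealized {M : Type u'} [L.Structure M] {A : Set M} {m : ℕ}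
    (p : Set (InfFormula L (↥A ⊕ Fin m) 0)) : Prop :=
  ∃ v : Fin m → M, ∀ φ ∈ p, φ.RealizeP v

/-- `B` is an independent subset of the pregeometry `⟨H, cl_H⟩`. -/
def IsIndep (H : QMObj.{u} L) (B : Set H.carrier) : Prop :=
  ∀ x ∈ B, x ∉ H.cl (B \ {x})

/-- `B` is a basis of the pregeometry `⟨H, cl_H⟩`: a maximal independent subset. -/
def IsBasis (H : QMObj.{u} L) (B : Set H.carrier) : Prop :=
  IsIndep H B ∧ ∀ B' : Set H.carrier, B ⊆ B' → IsIndep H B' → B' = B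

/-- The model-theoretic algebraic closure of `X` in `M`: the set of elements
satisfying some first-order formula with parameters in `X` having finitely many
solutions. -/
def aclS (L : FirstOrder.Language.{v, w}) (M : Type u) [L.Structure M] (X : Set M) :
    Set M :=
  {y | ∃ (n : ℕ) (φ : L.BoundedFormula (Fin n) 1) (v : Fin n → M),
    (∀ i, v i ∈ X) ∧ φ.Realize v ![y] ∧ {z : M | φ.Realize v ![z]}.Finite}

/-!
Fix bases of the two structures, indexed by the same set, and an infinite countable set `S` of
indices. The stages `cl (S ∪ X)`, with `X` a finite set of indices, are countable and exhaust each
structure, so it suffices to extend a partial embedding to one stage after another. When the stages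
of all proper subsets of `X` are already covered, extending to the stage of `X` means extending over
its crown `⋃ x ∈ X, cl ((S ∪ X) \ {x})`, compatibly with everything else known so far, which lies in
the big crown `⋃ x ∈ X, cl (univ \ {x})`.

`ℵ₀`-homogeneity does not apply, as the crown is neither finite nor closed. But the type of a finite
tuple of the stage over the big crown is isolated by a finite part `A` of the crown. Indeed, an
automorphism `g` of the stage that fixes `A` and the basis can be replaced, without changing its
values on the tuple, by one that fixes each `cl ((S ∪ X) \ {x, pr x})`, where `x ↦ pr x ∈ S` is
injective: take the commutator of `g` with the automorphism interchanging the basis elements of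
index `x` and `pr x`, for one `x` after the other. Any finite part of the big crown can be moved
into these closures over the tuple, by relocating the indices it involves.

Given the isolation, a back-and-forth over the crown extends the map to the new stage. Zorn's lemma
and induction on `X` yield a map that covers all stages.
-/

lemma mem_pdom {α β : Type*} {p : Set (α × β)} {a : α} : a ∈ pdom p ↔ ∃ b, (a, b) ∈ p := by
  simp [pdom]

lemma mem_pimg {α β : Type*} {p : Set (α × β)} {b : β} : b ∈ pimg p ↔ ∃ a, (a, b) ∈ p := by
  simp [pimg]

lemma pdom_union {α β : Type*} (p q : Set (α × β)) : pdom (p ∪ q) = pdom p ∪ pdom q :=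
  image_union _ _ _

lemma pimg_union {α β : Type*} (p q : Set (α × β)) : pimg (p ∪ q) = pimg p ∪ pimg q :=
  image_union _ _ _

lemma exists_directedOn_forall_inter_nonempty {α ι : Type*} [Countable ι] {Φ : Set α → Prop}
    (hempty : Φ ∅) (D : ι → Set α) (hext : ∀ r, Φ r → ∀ i, ∃ z ∈ D i, Φ (r ∪ {z})) :
    ∃ S : Set (Set α), S.Nonempty ∧ DirectedOn (· ⊆ ·) S ∧ (∀ r ∈ S, Φ r) ∧
      ∀ i, ∃ r ∈ S, (r ∩ D i).Nonempty := by
  have := Encodable.ofCountable ι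
  let 𝒟 (i : ι) : Order.Cofinal {r // Φ r} := ⟨{r | (r.1 ∩ D i).Nonempty}, fun r ↦ by
    obtain ⟨z, hz, hr⟩ := hext r r.2 i
    exact ⟨⟨_, hr⟩, ⟨z, by simp, hz⟩, Subtype.coe_le_coe.1 subset_union_left⟩⟩
  let I := Order.idealOfCofinals ⟨∅, hempty⟩ 𝒟
  refine ⟨(↑) '' (I : Set {r // Φ r}), I.nonempty.image _, ?_, ?_, fun i ↦ ?_⟩
  · exact directedOn_image.2 (I.directed.mono fun {_ _} h ↦ h)
  · exact forall_mem_image.2 fun r _ ↦ r.2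
  · obtain ⟨r, hr, hrI⟩ := Order.cofinal_meets_idealOfCofinals ⟨∅, hempty⟩ 𝒟 i
    exact ⟨r, mem_image_of_mem _ hrI, hr⟩

namespace IsPartialEmbedding

variable {H H' H'' : Type u} [L.Structure H] [L.Structure H'] [L.Structure H'']

lemma mono {p q : Set (H × H')} (hq : IsPartialEmbedding (L := L) q) (h : p ⊆ q) :
    IsPartialEmbedding (L := L) p :=
  fun n φ hφ a b hab ↦ hq n φ hφ a b fun i ↦ h (hab i)

lemma inv {p : Set (H × H')} (hp : IsPartialEmbedding (L := L) p) :
    IsPartialEmbedding (L := L) (SetRel.inv p) :=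
  fun n φ hφ a b hab ↦ (hp n φ hφ b a hab).symm

lemma comp {p : Set (H × H')} {q : Set (H' × H'')} (hp : IsPartialEmbedding (L := L) p)
    (hq : IsPartialEmbedding (L := L) q) : IsPartialEmbedding (L := L) (SetRel.comp p q) := by
  intro n φ hφ a b hab
  choose c hc using hab
  exact (hp n φ hφ a c fun i ↦ (hc i).1).trans (hq n φ hφ c b fun i ↦ (hc i).2)

lemma graphOn_id (A : Set H) : IsPartialEmbedding (L := L) (A.graphOn id) := by
  intro n φ _ a b hab
  rw [show a = b from funext fun i ↦ (mem_graphOn.1 (hab i)).2]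

lemma of_finite {p : Set (H × H')} (h : ∀ q ⊆ p, q.Finite → IsPartialEmbedding (L := L) q) :
    IsPartialEmbedding (L := L) p := fun n φ hφ a b hab ↦
  h (range fun i ↦ (a i, b i)) (range_subset_iff.2 hab) (finite_range _) n φ hφ a b
    fun i ↦ mem_range_self i

lemma sUnion {S : Set (Set (H × H'))} (hne : S.Nonempty) (hdir : DirectedOn (· ⊆ ·) S)
    (h : ∀ p ∈ S, IsPartialEmbedding (L := L) p) : IsPartialEmbedding (L := L) (⋃₀ S) := by
  refine of_finite fun q hq hfin ↦ ?_
  obtain ⟨p, hp, hqp⟩ := hdir.exists_mem_subset_of_finite_of_subset_sUnion hne hfin hq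
  exact (h p hp).mono hqp

lemma eq_iff_eq {p : Set (H × H')} (hp : IsPartialEmbedding (L := L) p) {a b : H} {a' b' : H'}
    (ha : (a, a') ∈ p) (hb : (b, b') ∈ p) : a = b ↔ a' = b' := by
  have := hp 2 (Term.equal (Term.var 0) (Term.var 1)) (BoundedFormula.IsAtomic.equal _ _).isQF
    ![a, b] ![a', b'] (by simp [Fin.forall_fin_two, ha, hb])
  simpa [Formula.realize_equal] using this

lemma finite_inter_fst_preimage {p : Set (H × H')} (hp : IsPartialEmbedding (L := L) p) {A : Set H}
    (hA : A.Finite) : (p ∩ Prod.fst ⁻¹' A).Finite :=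
  Finite.of_injOn (f := Prod.fst) (fun _ hz ↦ hz.2)
    (fun _ hz _ hz' h ↦ Prod.ext h ((hp.eq_iff_eq hz.1 hz'.1).1 h)) hA

lemma exists_equiv_eq_graphOn {p : Set (H × H')} (hp : IsPartialEmbedding (L := L) p)
    (hdom : pdom p = Set.univ) (himg : pimg p = Set.univ) :
    ∃ e : H ≃ H', p = Set.univ.graphOn e := by
  simpa using exists_equiv_range_eq_graphOn_univ (f := ((↑) : p → H × H'))
    (fun a ↦ by simpa [mem_pdom] using hdom.ge (Set.mem_univ a))
    (fun b ↦ by simpa [mem_pimg] using himg.ge (Set.mem_univ b))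
    (fun x y ↦ hp.eq_iff_eq x.2 y.2)

lemma nonempty_equiv {p : Set (H × H')} (hp : IsPartialEmbedding (L := L) p)
    (hdom : pdom p = Set.univ) (himg : pimg p = Set.univ) : Nonempty (H ≃[L] H') := by
  obtain ⟨e, rfl⟩ := hp.exists_equiv_eq_graphOn hdom himg
  have he (a : H) : (a, e a) ∈ Set.univ.graphOn e := by simp
  refine ⟨⟨e, fun {n} F x ↦ ?_, fun {n} R x ↦ ?_⟩⟩
  · have := hp (n + 1) (Term.equal (Term.func F fun i ↦ Term.var i.succ) (Term.var 0))
      (BoundedFormula.IsAtomic.equal _ _).isQF (Fin.cons (Structure.funMap F x) x)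
      (Fin.cons (e (Structure.funMap F x)) (e ∘ x))
      (Fin.cases (he _) fun i ↦ by simp)
    exact (by simpa [Formula.realize_equal, Function.comp_def] using this :
      Structure.funMap F (e ∘ x) = e (Structure.funMap F x)).symm
  · have := hp n (R.formula fun i ↦ Term.var i) (BoundedFormula.IsAtomic.rel _ _).isQF x (e ∘ x)
      fun i ↦ he _
    exact (by simpa only [Formula.realize_rel, Term.realize_var] using this.symm :
      Structure.RelMap R (e ∘ x) ↔ Structure.RelMap R x)

theorem exists_back_and_forth {f : Set (H × H')} (hf : IsPartialEmbedding (L := L) f)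
    {A : Set H} {A' : Set H'} (hA : A.Countable) (hA' : A'.Countable)
    (forth : ∀ r ⊆ A ×ˢ A', r.Finite → IsPartialEmbedding (L := L) (f ∪ r) →
      ∀ x ∈ A, ∃ y ∈ A', IsPartialEmbedding (L := L) (f ∪ r ∪ {(x, y)}))
    (back : ∀ r ⊆ A ×ˢ A', r.Finite → IsPartialEmbedding (L := L) (f ∪ r) →
      ∀ y ∈ A', ∃ x ∈ A, IsPartialEmbedding (L := L) (f ∪ r ∪ {(x, y)})) :
    ∃ g, IsPartialEmbedding (L := L) g ∧ f ⊆ g ∧ g ⊆ f ∪ A ×ˢ A' ∧ A ⊆ pdom g ∧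
      A' ⊆ pimg g := by
  let Φ (r : Set (H × H')) := r ⊆ A ×ˢ A' ∧ r.Finite ∧ IsPartialEmbedding (L := L) (f ∪ r)
  have insert_mem {r x y} (hr : Φ r) (hx : x ∈ A) (hy : y ∈ A')
      (h : IsPartialEmbedding (L := L) (f ∪ r ∪ {(x, y)})) : Φ (r ∪ {(x, y)}) :=
    ⟨union_subset hr.1 (by simp [hx, hy]), hr.2.1.union (finite_singleton _),
      by rwa [← union_assoc]⟩
  have := hA.to_subtype
  have := hA'.to_subtype
  obtain ⟨S, ⟨r₀, hr₀⟩, hdir, hS, meets⟩ := exists_directedOn_forall_inter_nonempty (Φ := Φ)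
    ⟨empty_subset _, finite_empty, by rwa [union_empty]⟩
    (Sum.elim (fun x : A ↦ {z | z.1 = x}) (fun y : A' ↦ {z | z.2 = y})) (by
      rintro r hr (⟨x, hx⟩ | ⟨y, hy⟩)
      · obtain ⟨y, hy, h⟩ := forth r hr.1 hr.2.1 hr.2.2 x hx
        exact ⟨(x, y), rfl, insert_mem hr hx hy h⟩
      · obtain ⟨x, hx, h⟩ := back r hr.1 hr.2.1 hr.2.2 y hy
        exact ⟨(x, y), rfl, insert_mem hr hx hy h⟩)
  have subset_sUnion {r} (hr : r ∈ S) : f ∪ r ⊆ ⋃₀ ((f ∪ ·) '' S) :=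
    subset_sUnion_of_mem (mem_image_of_mem _ hr)
  refine ⟨⋃₀ ((f ∪ ·) '' S), .sUnion ⟨_, mem_image_of_mem _ hr₀⟩ ?_ ?_,
    subset_union_left.trans (subset_sUnion hr₀), ?_, fun x hx ↦ ?_, fun y hy ↦ ?_⟩
  · exact directedOn_image.2 (hdir.mono fun {r r'} h ↦ union_subset_union_right f h)
  · exact forall_mem_image.2 fun r hr ↦ (hS r hr).2.2
  · exact sUnion_subset (forall_mem_image.2 fun r hr ↦ union_subset_union_right f (hS r hr).1)
  · obtain ⟨r, hr, z, hzr, rfl⟩ := meets (.inl ⟨x, hx⟩)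
    exact ⟨z, subset_sUnion hr (.inr hzr), rfl⟩
  · obtain ⟨r, hr, z, hzr, rfl⟩ := meets (.inr ⟨y, hy⟩)
    exact ⟨z, subset_sUnion hr (.inr hzr), rfl⟩

end IsPartialEmbedding

namespace IsPregeometry

variable {α ι γ : Type*} {cl : Set α → Set α}

lemma cl_subset_cl (h : IsPregeometry cl) {X Y : Set α} (hX : X ⊆ cl Y) : cl X ⊆ cl Y :=
  (h.mono hX).trans (h.idem Y).subset

lemma cl_cl_union (h : IsPregeometry cl) (X Y : Set α) : cl (cl X ∪ Y) = cl (X ∪ Y) :=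
  (h.cl_subset_cl (union_subset (h.mono subset_union_left)
    (subset_union_right.trans (h.subset_cl _)))).antisymm
    (h.mono (union_subset_union_left _ (h.subset_cl _)))

lemma exists_finite_subset (h : IsPregeometry cl) (u : ι → α) {T : Set ι} {E : Set α}
    (hE : E.Finite) (hET : E ⊆ cl (u '' T)) : ∃ D ⊆ T, D.Finite ∧ E ⊆ cl (u '' D) := by
  have mem_cl (y) (hy : y ∈ E) : ∃ D ⊆ T, D.Finite ∧ y ∈ cl (u '' D) := by
    obtain ⟨F, hF, hy⟩ := h.finChar _ y (hET hy)
    exact exists_subset_image_finite_and (p := (y ∈ cl ·)).1 ⟨F, hF, F.finite_toSet, hy⟩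
  choose! D hDT hD hyD using mem_cl
  exact ⟨⋃ y ∈ E, D y, iUnion₂_subset hDT, hE.biUnion hD,
    fun y hy ↦ h.mono (image_mono (subset_biUnion_of_mem hy)) (hyD y hy)⟩

lemma cl_image_sUnion_subset (h : IsPregeometry cl) {c : Set (Set γ)} (hne : c.Nonempty)
    (hdir : DirectedOn (· ⊆ ·) c) (u : ι → α) (z : ι → γ) (π : γ → α) {I : Set ι}
    (hc : ∀ r ∈ c, cl (u '' (I ∩ z ⁻¹' r)) ⊆ π '' r) : cl (u '' (I ∩ z ⁻¹' ⋃₀ c)) ⊆ π '' ⋃₀ c := by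
  intro y hy
  obtain ⟨D, hDc, hD, hyD⟩ :=
    h.exists_finite_subset u (finite_singleton y) (singleton_subset_iff.2 hy)
  obtain ⟨r, hr, hDr⟩ := hdir.exists_mem_subset_of_finite_of_subset_sUnion hne (hD.image z)
    (image_subset_iff.2 fun i hi ↦ (hDc hi).2)
  have hDI : D ⊆ I ∩ z ⁻¹' r := fun i hi ↦ ⟨(hDc hi).1, hDr (mem_image_of_mem z hi)⟩
  exact image_mono (subset_sUnion_of_mem hr) (hc r hr (h.mono (image_mono hDI) (hyD rfl)))

lemma mk_cl_le {α : Type u} {cl : Set α → Set α} (h : IsPregeometry cl)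
    (hfin : ∀ X : Set α, X.Finite → (cl X).Countable) (X : Set α) : #(cl X) ≤ max ℵ₀ #X := by
  classical
  have cover : cl X ⊆ ⋃ F : Finset X, cl ((↑) '' (F : Set X)) := fun y hy ↦ by
    obtain ⟨D, -, hD, hyD⟩ := h.exists_finite_subset ((↑) : X → α) (T := Set.univ)
      (finite_singleton y) (by simpa using hy)
    exact mem_iUnion.2 ⟨hD.toFinset, by simpa using hyD⟩
  calc #(cl X) ≤ #(⋃ F : Finset X, cl ((↑) '' (F : Set X))) := mk_le_mk_of_subset cover
    _ ≤ #(Finset X) * ⨆ F : Finset X, #(cl ((↑) '' (F : Set X))) := mk_iUnion_le _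
    _ ≤ max ℵ₀ #X * ℵ₀ := mul_le_mul'
        ((mk_le_of_surjective List.toFinset_surjective).trans (mk_list_le_max _))
        (ciSup_le' fun F ↦ le_aleph0_iff_set_countable.2 (hfin _ (F.finite_toSet.image _)))
    _ = max ℵ₀ #X := by rw [mul_eq_left (le_max_left _ _) (le_max_left _ _) aleph0_ne_zero]

end IsPregeometry

/-- The family `u`, restricted to the index set `I`, is independent with respect to `cl`. -/
def IndepOn {α ι : Type*} (cl : Set α → Set α) (u : ι → α) (I : Set ι) : Prop :=
  ∀ i ∈ I, u i ∉ cl (u '' (I \ {i}))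

namespace IndepOn

variable {α ι κ : Type*} {cl : Set α → Set α} {u : ι → α} {I : Set ι}

lemma notMem_cl (hu : IndepOn cl u I) (h : IsPregeometry cl) {i : ι} {J : Set ι} (hi : i ∈ I)
    (hJ : J ⊆ I) (hiJ : i ∉ J) : u i ∉ cl (u '' J) :=
  fun hmem ↦ hu i hi (h.mono (image_mono (subset_sdiff_singleton hJ hiJ)) hmem)

lemma mono (hu : IndepOn cl u I) (h : IsPregeometry cl) {J : Set ι} (hJ : J ⊆ I) :
    IndepOn cl u J :=
  fun _ hi ↦ hu.notMem_cl h (hJ hi) (sdiff_subset.trans hJ) (notMem_sdiff_of_mem rfl)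

lemma comp (hu : IndepOn cl u I) (h : IsPregeometry cl) {τ : κ → ι} {J : Set κ}
    (hτ : InjOn τ J) (hJ : MapsTo τ J I) : IndepOn cl (u ∘ τ) J := by
  intro k hk
  rw [image_comp]
  refine hu.notMem_cl h (hJ hk) ((image_mono sdiff_subset).trans hJ.image_subset) ?_
  rintro ⟨l, hl, hlk⟩
  exact hl.2 (hτ hl.1 hk hlk)

end IndepOn

section Basis

variable {H : QMObj.{u} L}

lemma exists_isBasis (h : IsPregeometry H.cl) : ∃ B, IsBasis H B := by
  obtain ⟨B, -, hB⟩ := zorn_subset_nonempty {B | IsIndep H B} (by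
    refine fun c hcS hc hne ↦ ⟨⋃₀ c, ?_, fun s hs ↦ subset_sUnion_of_mem hs⟩
    rintro x ⟨s, hs, hxs⟩ hx
    obtain ⟨F, hF, hxF⟩ := h.finChar _ _ hx
    obtain ⟨t, ht, hFt⟩ := hc.directedOn.exists_mem_subset_of_finite_of_subset_sUnion hne
      F.finite_toSet (hF.trans sdiff_subset)
    obtain ⟨r, hr, hsr, htr⟩ := hc.directedOn s hs t ht
    have hFr : ↑F ⊆ r \ {x} := subset_sdiff_singleton (hFt.trans htr) fun hx ↦ (hF hx).2 rfl
    exact hcS hr x (hsr hxs) (h.mono hFr hxF))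
    ∅ (fun x hx ↦ hx.elim)
  exact ⟨B, hB.prop, fun B' hBB' hB' ↦ (hB.eq_of_subset hB' hBB').symm⟩

lemma IsBasis.cl_eq_univ (h : IsPregeometry H.cl) {B : Set H.carrier} (hB : IsBasis H B) :
    H.cl B = Set.univ := by
  refine eq_univ_of_forall fun y ↦ by_contra fun hy ↦ ?_
  have hyB : y ∉ B := fun hyB ↦ hy (h.subset_cl _ hyB)
  suffices IsIndep H (insert y B) from hyB (hB.2 _ (subset_insert _ _) this ▸ mem_insert y B)
  rintro x (rfl | hx) hcl
  · rw [insert_sdiff_self_of_notMem hyB] at hcl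
    exact hy hcl
  · have hxy : y ≠ x := fun hyx ↦ hyB (hyx ▸ hx)
    rw [← insert_sdiff_singleton_comm hxy, ← union_singleton] at hcl
    have := h.exchange _ _ _ hcl (hB.1 x hx)
    rw [sdiff_union_of_subset (singleton_subset_iff.2 hx)] at this
    exact hy this

lemma IsBasis.mk_eq [Uncountable H.carrier] (h : IsPregeometry H.cl)
    (hfin : ∀ X : Set H.carrier, X.Finite → (H.cl X).Countable) {B : Set H.carrier}
    (hB : IsBasis H B) : #B = #H.carrier := by
  have hle := h.mk_cl_le hfin B
  rw [hB.cl_eq_univ h, mk_univ, le_max_iff] at hle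
  exact (mk_set_le B).antisymm (hle.resolve_left (aleph0_lt_mk_iff.2 ‹_›).not_ge)

end Basis

lemma pdom_inv {α β : Type*} (p : Set (α × β)) : pdom (SetRel.inv p) = pimg p := by
  ext; simp [mem_pdom, mem_pimg, SetRel.inv]

lemma pimg_inv {α β : Type*} (p : Set (α × β)) : pimg (SetRel.inv p) = pdom p :=
  (pdom_inv _).symm

section SpanIso

variable {C : Set (QMObj.{u} L)} {H H' : QMObj.{u} L}

lemma CCOE.countable {G : Set H.carrier} (hG : CCOE H G) : G.Countable :=
  hG.elim And.left fun h ↦ h ▸ countable_empty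

namespace IsQMClass

lemma countable_cl (hC : IsQMClass C) (hH : H ∈ C) {X : Set H.carrier} (hX : X.Countable) :
    (H.cl X).Countable := by
  have := (hC.pregeom H hH).mk_cl_le (hC.cl_finite_countable H hH) X
  rwa [max_eq_left (le_aleph0_iff_set_countable.2 hX), le_aleph0_iff_set_countable] at this

lemma mem_cl_image_iff (hC : IsQMClass C) (hH : H ∈ C) (hH' : H' ∈ C)
    {p : Set (H.carrier × H'.carrier)} (hp : IsPartialEmbedding (L := L) p) {κ : Type*}
    {a : κ → H.carrier} {b : κ → H'.carrier} {J : Set κ} (hJ : ∀ k ∈ J, (a k, b k) ∈ p)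
    {y : H.carrier} {y' : H'.carrier} (hy : (y, y') ∈ p) :
    y ∈ H.cl (a '' J) ↔ y' ∈ H'.cl (b '' J) := by
  have himage : pimage p (a '' J) = b '' J := by
    refine Subset.antisymm ?_ (by rintro _ ⟨k, hk, rfl⟩; exact ⟨a k, ⟨k, hk, rfl⟩, hJ k hk⟩)
    rintro y' ⟨_, ⟨k, hk, rfl⟩, hky'⟩
    exact ⟨k, hk, (hp.eq_iff_eq (hJ k hk) hky').1 rfl⟩
  rw [← himage]
  exact hC.cl_embedding H hH H' hH' p hp _
    (by rintro _ ⟨k, hk, rfl⟩; exact mem_pdom.2 ⟨b k, hJ k hk⟩) y y' hy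

lemma mem_cl_pdom_iff (hC : IsQMClass C) (hH : H ∈ C) (hH' : H' ∈ C)
    {p q : Set (H.carrier × H'.carrier)} (hp : IsPartialEmbedding (L := L) p) (hqp : q ⊆ p)
    {y : H.carrier} {y' : H'.carrier} (hy : (y, y') ∈ p) :
    y ∈ H.cl (pdom q) ↔ y' ∈ H'.cl (pimg q) :=
  hC.mem_cl_image_iff hH hH' hp (fun _ hk ↦ hqp hk) hy

lemma isPartialEmbedding_empty (hC : IsQMClass C) (hH : H ∈ C) (hH' : H' ∈ C) :
    IsPartialEmbedding (L := L) (∅ : Set (H.carrier × H'.carrier)) := by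
  rintro (_ | n) φ hφ a b hab
  · have := hC.qf_theory H hH H' hH' (φ.relabel Fin.elim0) (hφ.relabel _)
    rwa [Sentence.Realize, Sentence.Realize, Formula.realize_relabel, Formula.realize_relabel,
      Subsingleton.elim (default ∘ Fin.elim0) a, Subsingleton.elim (default ∘ Fin.elim0) b] at this
  · exact (hab 0).elim

lemma exists_forth (hC : IsQMClass C) (hH : H ∈ C) (hH' : H' ∈ C)
    {g f q : Set (H.carrier × H'.carrier)} (hg : CCOE H (pdom g)) (hg' : CCOE H' (pimg g))
    (hf : f.Finite) (hgf : IsPartialEmbedding (L := L) (g ∪ f)) (hq : q ⊆ g ∪ f)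
    {x : H.carrier} (hx : x ∈ H.cl (pdom q)) :
    ∃ y ∈ H'.cl (pimg q), IsPartialEmbedding (L := L) (g ∪ f ∪ {(x, y)}) := by
  have hx' : x ∈ H.cl (pdom f ∪ pdom g) := by
    rw [union_comm, ← pdom_union]
    exact (hC.pregeom H hH).mono (image_mono hq) hx
  obtain ⟨y, hy⟩ := hC.homogeneity₂ H hH H' hH' g f hg hg' (hgf.mono subset_union_left)
    (hf.image _) hgf x hx'
  exact ⟨y, (hC.mem_cl_pdom_iff hH hH' hy (hq.trans subset_union_left) (.inr rfl)).1 hx, hy⟩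

lemma exists_back (hC : IsQMClass C) (hH : H ∈ C) (hH' : H' ∈ C)
    {g f q : Set (H.carrier × H'.carrier)} (hg : CCOE H (pdom g)) (hg' : CCOE H' (pimg g))
    (hf : f.Finite) (hgf : IsPartialEmbedding (L := L) (g ∪ f)) (hq : q ⊆ g ∪ f)
    {y : H'.carrier} (hy : y ∈ H'.cl (pimg q)) :
    ∃ x ∈ H.cl (pdom q), IsPartialEmbedding (L := L) (g ∪ f ∪ {(x, y)}) := by
  rw [← pdom_inv] at hg' hy
  rw [← pimg_inv] at hg ⊢
  obtain ⟨x, hx, h⟩ := hC.exists_forth hH' hH hg' hg (hf.preimage Prod.swap_injective.injOn)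
    hgf.inv (SetRel.inv_mono hq) hy
  exact ⟨x, hx, h.inv.mono (union_subset_union_right _ (singleton_subset_iff.2 rfl))⟩

lemma exists_extension_cl (hC : IsQMClass C) (hH : H ∈ C) (hH' : H' ∈ C)
    {g f : Set (H.carrier × H'.carrier)} (hg : CCOE H (pdom g)) (hg' : CCOE H' (pimg g))
    (hf : f.Finite) (hgf : IsPartialEmbedding (L := L) (g ∪ f)) :
    ∃ p, IsPartialEmbedding (L := L) p ∧ g ∪ f ⊆ p ∧ pdom p = H.cl (pdom (g ∪ f)) ∧
      pimg p = H'.cl (pimg (g ∪ f)) := by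
  obtain ⟨p, hp, hgfp, hpA, hAp, hA'p⟩ := hgf.exists_back_and_forth
    (A := H.cl (pdom (g ∪ f))) (A' := H'.cl (pimg (g ∪ f)))
    (hC.countable_cl hH (by rw [pdom_union]; exact hg.countable.union (hf.image _).countable))
    (hC.countable_cl hH' (by rw [pimg_union]; exact hg'.countable.union (hf.image _).countable))
    (by
      intro r _ hr h x hx
      rw [union_assoc] at h ⊢
      exact hC.exists_forth hH hH' hg hg' (hf.union hr) h
        (union_subset_union_right g subset_union_left) hx)
    (by
      intro r _ hr h y hy
      rw [union_assoc] at h ⊢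
      exact hC.exists_back hH hH' hg hg' (hf.union hr) h
        (union_subset_union_right g subset_union_left) hy)
  refine ⟨p, hp, hgfp, (image_subset_iff.2 fun z hz ↦ ?_).antisymm hAp,
    (image_subset_iff.2 fun z hz ↦ ?_).antisymm hA'p⟩
  · exact (hpA hz).elim (fun h ↦ (hC.pregeom H hH).subset_cl _ (mem_image_of_mem _ h)) And.left
  · exact (hpA hz).elim (fun h ↦ (hC.pregeom H' hH').subset_cl _ (mem_image_of_mem _ h)) And.right

end IsQMClass

/-- The relation `p` is the graph of an isomorphism of `cl (u '' J)` onto `cl (v '' J)` which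
maps `u i` to `v i` for every `i ∈ J`. -/
structure IsSpanIso {ι : Type*} (H H' : QMObj.{u} L) (u : ι → H.carrier) (v : ι → H'.carrier)
    (J : Set ι) (p : Set (H.carrier × H'.carrier)) : Prop where
  isPartialEmbedding : IsPartialEmbedding (L := L) p
  pdom_eq : pdom p = H.cl (u '' J)
  pimg_eq : pimg p = H'.cl (v '' J)
  mem : ∀ i ∈ J, (u i, v i) ∈ p

namespace IsSpanIso

variable {ι : Type*} {u : ι → H.carrier} {v : ι → H'.carrier} {I J : Set ι}
  {p : Set (H.carrier × H'.carrier)}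

lemma mono_index (hp : IsSpanIso H H' u v J p) (h : IsPregeometry H.cl) (h' : IsPregeometry H'.cl)
    (hJI : J ⊆ I) (hI : ∀ i ∈ I, (u i, v i) ∈ p) : IsSpanIso H H' u v I p where
  isPartialEmbedding := hp.isPartialEmbedding
  pdom_eq := hp.pdom_eq.trans <| (h.mono (image_mono hJI)).antisymm <| h.cl_subset_cl <|
    image_subset_iff.2 fun i hi ↦ hp.pdom_eq.subset (mem_pdom.2 ⟨v i, hI i hi⟩)
  pimg_eq := hp.pimg_eq.trans <| (h'.mono (image_mono hJI)).antisymm <| h'.cl_subset_cl <|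
    image_subset_iff.2 fun i hi ↦ hp.pimg_eq.subset (mem_pimg.2 ⟨u i, hI i hi⟩)
  mem := hI

lemma ccoe_pdom (hp : IsSpanIso H H' u v J p) (hC : IsQMClass C) (hH : H ∈ C)
    (hJ : J.Countable) : CCOE H (pdom p) := by
  rw [hp.pdom_eq]
  exact .inl ⟨hC.countable_cl hH (hJ.image _), (hC.pregeom H hH).idem _⟩

lemma ccoe_pimg (hp : IsSpanIso H H' u v J p) (hC : IsQMClass C) (hH' : H' ∈ C)
    (hJ : J.Countable) : CCOE H' (pimg p) := by
  rw [hp.pimg_eq]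
  exact .inl ⟨hC.countable_cl hH' (hJ.image _), (hC.pregeom H' hH').idem _⟩

lemma exists_insert (hp : IsSpanIso H H' u v J p) (hC : IsQMClass C) (hH : H ∈ C) (hH' : H' ∈ C)
    (hJ : J.Countable) {i : ι} (hu : u i ∉ H.cl (u '' J)) (hv : v i ∉ H'.cl (v '' J)) :
    ∃ r, p ⊆ r ∧ IsSpanIso H H' u v (insert i J) r := by
  have hdom := hp.ccoe_pdom hC hH hJ
  have himg := hp.ccoe_pimg hC hH' hJ
  have hext := hC.homogeneity₁ H hH H' hH' p hdom himg hp.isPartialEmbedding (u i) (v i)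
    (by rwa [hp.pdom_eq, (hC.pregeom H hH).idem]) (by rwa [hp.pimg_eq, (hC.pregeom H' hH').idem])
  obtain ⟨r, hr, hpr, hrdom, hrimg⟩ :=
    hC.exists_extension_cl hH hH' hdom himg (finite_singleton _) hext
  refine ⟨r, subset_union_left.trans hpr, hr, ?_, ?_, ?_⟩
  · rw [hrdom, pdom_union, hp.pdom_eq, (hC.pregeom H hH).cl_cl_union]
    simp [pdom, image_insert_eq]
  · rw [hrimg, pimg_union, hp.pimg_eq, (hC.pregeom H' hH').cl_cl_union]
    simp [pimg, image_insert_eq]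
  · exact forall_mem_insert.2 ⟨hpr (.inr rfl), fun j hj ↦ hpr (.inl (hp.mem j hj))⟩

lemma sUnion (hC : IsQMClass C) (hH : H ∈ C) (hH' : H' ∈ C)
    {c : Set (Set (H.carrier × H'.carrier))} (hne : c.Nonempty) (hdir : DirectedOn (· ⊆ ·) c)
    (hc : ∀ r ∈ c, IsSpanIso H H' u v (I ∩ (fun i ↦ (u i, v i)) ⁻¹' r) r) :
    IsSpanIso H H' u v (I ∩ (fun i ↦ (u i, v i)) ⁻¹' ⋃₀ c) (⋃₀ c) where
  isPartialEmbedding := .sUnion hne hdir fun r hr ↦ (hc r hr).isPartialEmbedding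
  pdom_eq := by
    refine Subset.antisymm (image_subset_iff.2 fun z ⟨r, hr, hz⟩ ↦ ?_)
      ((hC.pregeom H hH).cl_image_sUnion_subset hne hdir u _ _ fun r hr ↦ (hc r hr).pdom_eq.ge)
    exact (hC.pregeom H hH).mono (by gcongr; exact subset_sUnion_of_mem hr)
      ((hc r hr).pdom_eq.subset (mem_image_of_mem _ hz))
  pimg_eq := by
    refine Subset.antisymm (image_subset_iff.2 fun z ⟨r, hr, hz⟩ ↦ ?_)
      ((hC.pregeom H' hH').cl_image_sUnion_subset hne hdir v _ _ fun r hr ↦ (hc r hr).pimg_eq.ge)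
    exact (hC.pregeom H' hH').mono (by gcongr; exact subset_sUnion_of_mem hr)
      ((hc r hr).pimg_eq.subset (mem_image_of_mem _ hz))
  mem := fun _ hi ↦ hi.2

theorem exists_extension (hp : IsSpanIso H H' u v J p) (hC : IsQMClass C) (hH : H ∈ C)
    (hH' : H' ∈ C) (hJI : J ⊆ I) (hI : I.Countable) (hu : IndepOn H.cl u I)
    (hv : IndepOn H'.cl v I) : ∃ r, p ⊆ r ∧ IsSpanIso H H' u v I r := by
  have h := hC.pregeom H hH
  have h' := hC.pregeom H' hH'
  let uv (i : ι) := (u i, v i)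
  obtain ⟨m, hpm, hm⟩ := zorn_subset_nonempty {r | IsSpanIso H H' u v (I ∩ uv ⁻¹' r) r}
    (fun c hcS hc hne ↦ ⟨⋃₀ c, sUnion hC hH hH' hne hc.directedOn hcS,
      fun r hr ↦ subset_sUnion_of_mem hr⟩) p
    (hp.mono_index h h' (fun i hi ↦ ⟨hJI hi, hp.mem i hi⟩) fun _ hi ↦ hi.2)
  suffices I ⊆ uv ⁻¹' m from ⟨m, hpm, hm.prop.mono_index h h' inter_subset_left this⟩
  refine fun i hi ↦ by_contra fun him ↦ him ?_
  have hiJ : i ∉ I ∩ uv ⁻¹' m := fun h ↦ him h.2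
  obtain ⟨r, hmr, hr⟩ := hm.prop.exists_insert hC hH hH' (hI.mono inter_subset_left)
    (hu.notMem_cl h hi inter_subset_left hiJ) (hv.notMem_cl h' hi inter_subset_left hiJ)
  have hrS : IsSpanIso H H' u v (I ∩ uv ⁻¹' r) r := hr.mono_index h h'
    (fun j hj ↦ ⟨hj.elim (· ▸ hi) And.left, hr.mem j hj⟩) fun _ hj ↦ hj.2
  exact hm.le_of_ge hrS hmr (hr.mem i (mem_insert _ _))

end IsSpanIso

lemma IsQMClass.exists_isSpanIso (hC : IsQMClass C) (hH : H ∈ C) (hH' : H' ∈ C)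
    {ι : Type*} {u : ι → H.carrier} {v : ι → H'.carrier} {I : Set ι} (hI : I.Countable)
    (hu : IndepOn H.cl u I) (hv : IndepOn H'.cl v I) : ∃ p, IsSpanIso H H' u v I p := by
  have hempty : CCOE H (pdom (∅ : Set (H.carrier × H'.carrier))) := .inr (image_empty _)
  have hempty' : CCOE H' (pimg (∅ : Set (H.carrier × H'.carrier))) := .inr (image_empty _)
  obtain ⟨p₀, hp₀, -, hdom, himg⟩ := hC.exists_extension_cl hH hH' hempty hempty' finite_empty
    (by rw [union_empty]; exact hC.isPartialEmbedding_empty hH hH')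
  have hspan : IsSpanIso H H' u v ∅ p₀ :=
    ⟨hp₀, by simpa [pdom] using hdom, by simpa [pimg] using himg, fun _ hi ↦ hi.elim⟩
  obtain ⟨p, -, hp⟩ := hspan.exists_extension hC hH hH' (empty_subset I) hI hu hv
  exact ⟨p, hp⟩

end SpanIso

section PartialAut

variable {M : Type u} [L.Structure M]

/-- The permutations of `M` whose restriction to `N` is an automorphism of the structure induced
on `N`. Nothing is required outside `N`; taking permutations of the whole of `M` lets them act on
`M` without coercions to `N`. -/
def partialAut (L : FirstOrder.Language.{v, w}) {M : Type u} [L.Structure M] (N : Set M) :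
    Subgroup (Equiv.Perm M) where
  carrier := {e | e '' N = N ∧ IsPartialEmbedding (L := L) (N.graphOn e)}
  one_mem' := ⟨image_id N, .graphOn_id N⟩
  mul_mem' := by
    rintro e f ⟨heN, he⟩ ⟨hfN, hf⟩
    refine ⟨by rw [Equiv.Perm.coe_mul, image_comp, hfN, heN], (hf.comp he).mono ?_⟩
    rintro _ ⟨x, hx, rfl⟩
    exact ⟨f x, ⟨x, hx, rfl⟩, f x, hfN.subset ⟨x, hx, rfl⟩, rfl⟩
  inv_mem' := by
    rintro e ⟨heN, he⟩
    have hinv : (e⁻¹ : Equiv.Perm M) '' N = N := by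
      nth_rewrite 1 [← heN]
      rw [← image_comp, ← Equiv.Perm.coe_mul, inv_mul_cancel, Equiv.Perm.coe_one, image_id]
    refine ⟨hinv, he.inv.mono ?_⟩
    rintro _ ⟨x, hx, rfl⟩
    exact ⟨e⁻¹ x, hinv.subset ⟨x, hx, rfl⟩, by simp⟩

lemma IsPartialEmbedding.exists_mem_partialAut {N : Set M} {p : Set (M × M)}
    (hp : IsPartialEmbedding (L := L) p) (hdom : pdom p = N) (himg : pimg p = N) :
    ∃ e ∈ partialAut L N, p = N.graphOn e := by
  have mem_fst {x y} (h : (x, y) ∈ p) : x ∈ N := hdom.subset (mem_pdom.2 ⟨y, h⟩)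
  have mem_snd {x y} (h : (x, y) ∈ p) : y ∈ N := himg.subset (mem_pimg.2 ⟨x, h⟩)
  let q := p ∪ Nᶜ.graphOn id
  obtain ⟨e, he⟩ := exists_equiv_range_eq_graphOn_univ (f := ((↑) : q → M × M))
    (fun x ↦ by
      by_cases hx : x ∈ N
      · obtain ⟨y, hy⟩ := mem_pdom.1 (hdom.ge hx)
        exact ⟨⟨_, .inl hy⟩, rfl⟩
      · exact ⟨⟨(x, x), .inr ⟨x, hx, rfl⟩⟩, rfl⟩)
    (fun y ↦ by
      by_cases hy : y ∈ N
      · obtain ⟨x, hx⟩ := mem_pimg.1 (himg.ge hy)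
        exact ⟨⟨_, .inl hx⟩, rfl⟩
      · exact ⟨⟨(y, y), .inr ⟨y, hy, rfl⟩⟩, rfl⟩)
    (by
      rintro ⟨⟨x, y⟩, h | ⟨x, hx, h⟩⟩ ⟨⟨x', y'⟩, h' | ⟨x', hx', h'⟩⟩
      · exact hp.eq_iff_eq h h'
      · cases h'
        exact iff_of_false (fun hxx' ↦ hx' (hxx'.subst (mem_fst h)))
          fun hyx' ↦ hx' (hyx'.subst (mem_snd h))
      · cases h
        exact iff_of_false (fun hxx' ↦ hx (hxx'.symm.subst (mem_fst h')))
          fun hxy' ↦ hx (hxy'.symm.subst (mem_snd h'))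
      · cases h
        cases h'
        exact .rfl)
  rw [Subtype.range_coe] at he
  have hpe : p = N.graphOn e := by
    ext ⟨x, y⟩
    refine ⟨fun h ↦ ⟨x, mem_fst h, ?_⟩, ?_⟩
    · simpa using he.subset (.inl h)
    · rintro ⟨_, hx, ⟨⟩⟩
      have hxq : (x, e x) ∈ q := he.ge ⟨x, trivial, rfl⟩
      exact hxq.resolve_right fun hxN ↦ (mem_graphOn.1 hxN).1 hx
  refine ⟨e, ⟨?_, hpe ▸ hp⟩, hpe⟩
  rw [← image_snd_graphOn (f := e), ← hpe]
  exact himg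

end PartialAut

section Automorphism

variable {C : Set (QMObj.{u} L)} {H : QMObj.{u} L} {ι : Type*} {a : ι → H.carrier} {T : Set ι}
  {τ : ι → ι}

lemma IsQMClass.image_cl (hC : IsQMClass C) (hH : H ∈ C) {N U : Set H.carrier}
    (hN : H.cl N = N) {e : Equiv.Perm H.carrier} (he : e ∈ partialAut L N) (hU : U ⊆ N) :
    e '' H.cl U = H.cl (e '' U) := by
  have h := hC.pregeom H hH
  have mem_iff {y} (hy : y ∈ N) : y ∈ H.cl U ↔ e y ∈ H.cl (e '' U) := by
    simpa using hC.mem_cl_image_iff hH hH he.2 (a := id) (fun k hk ↦ ⟨k, hU hk, rfl⟩) ⟨y, hy, rfl⟩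
  refine Subset.antisymm (image_subset_iff.2 fun y hy ↦ ?_) fun z hz ↦ ?_
  · exact (mem_iff ((h.mono hU).trans hN.subset hy)).1 hy
  · obtain ⟨y, hy, rfl⟩ : z ∈ e '' N := by
      rw [he.1, ← hN]
      exact h.mono ((image_mono hU).trans he.1.subset) hz
    exact mem_image_of_mem e ((mem_iff hy).2 hz)

lemma IsQMClass.image_cl_image (hC : IsQMClass C) (hH : H ∈ C) {e : Equiv.Perm H.carrier}
    (he : e ∈ partialAut L (H.cl (a '' T))) (hea : ∀ k ∈ T, e (a k) = a (τ k)) {J : Set ι}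
    (hJ : J ⊆ T) : e '' H.cl (a '' J) = H.cl (a '' (τ '' J)) := by
  have h := hC.pregeom H hH
  rw [hC.image_cl hH (h.idem _) he ((image_mono hJ).trans (h.subset_cl _)), image_image,
    image_image]
  exact congrArg H.cl (image_congr fun k hk ↦ hea k (hJ hk))

lemma IsSpanIso.exists_mem_partialAut (hC : IsQMClass C) (hH : H ∈ C) {J : Set ι}
    {p : Set (H.carrier × H.carrier)} (hp : IsSpanIso H H a (a ∘ τ) J p) (hJT : J ⊆ T)
    (hT : T.Countable) (ha : IndepOn H.cl a T) (hτ : BijOn τ T T) :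
    ∃ e ∈ partialAut L (H.cl (a '' T)), (∀ z ∈ p, e z.1 = z.2) ∧ ∀ k ∈ T, e (a k) = a (τ k) := by
  have h := hC.pregeom H hH
  obtain ⟨r, hpr, hr⟩ :=
    hp.exists_extension hC hH hH hJT hT ha (ha.comp h hτ.injOn hτ.mapsTo)
  obtain ⟨e, he, rfl⟩ := hr.isPartialEmbedding.exists_mem_partialAut hr.pdom_eq
    (by rw [hr.pimg_eq, image_comp, hτ.image_eq])
  exact ⟨e, he, fun z hz ↦ (mem_graphOn.1 (hpr hz)).2, fun k hk ↦ (mem_graphOn.1 (hr.mem k hk)).2⟩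

lemma IsQMClass.exists_mem_partialAut (hC : IsQMClass C) (hH : H ∈ C) (hT : T.Countable)
    (ha : IndepOn H.cl a T) {D : Set ι} (hDT : D ⊆ T)
    {q : Set (H.carrier × H.carrier)} (hq : IsPartialEmbedding (L := L) q) (hqfin : q.Finite)
    (hqa : ∀ k ∈ D, (a k, a k) ∈ q) (hqD : pdom q ⊆ H.cl (a '' D)) :
    ∃ e ∈ partialAut L (H.cl (a '' T)), (∀ z ∈ q, e z.1 = z.2) ∧ ∀ k ∈ T, e (a k) = a k := by
  have h := hC.pregeom H hH
  have cl_pdom : H.cl (pdom q) = H.cl (a '' D) := (h.cl_subset_cl hqD).antisymm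
    (h.mono (image_subset_iff.2 fun k hk ↦ mem_image_of_mem Prod.fst (hqa k hk)))
  have cl_pimg : H.cl (pimg q) = H.cl (a '' D) := by
    refine (h.cl_subset_cl (image_subset_iff.2 fun z hz ↦ ?_)).antisymm
      (h.mono (image_subset_iff.2 fun k hk ↦ mem_image_of_mem Prod.snd (hqa k hk)))
    exact (hC.mem_cl_image_iff hH hH hq hqa hz).1 (hqD (mem_image_of_mem Prod.fst hz))
  obtain ⟨p, hp, hqp, hdom, himg⟩ := hC.exists_extension_cl hH hH (g := ∅) (f := q)
    (.inr (image_empty _)) (.inr (image_empty _)) hqfin (by rwa [empty_union])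
  rw [empty_union] at hqp hdom himg
  have hspan : IsSpanIso H H a (a ∘ id) D p :=
    ⟨hp, hdom.trans cl_pdom, himg.trans cl_pimg, fun k hk ↦ hqp (hqa k hk)⟩
  obtain ⟨e, he, hep, hea⟩ := hspan.exists_mem_partialAut hC hH hDT hT ha (bijOn_id T)
  exact ⟨e, he, fun z hz ↦ hep z (hqp hz), hea⟩

end Automorphism

section Commutator

open scoped Pointwise commutatorElement

variable {G Ω κ : Type*} [Group G] [MulAction G Ω]

lemma commutatorElement_mem_fixingSubgroup {k g : G} {S : Set Ω} (hk : k ∈ fixingSubgroup G S)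
    (hg : g ∈ MulAction.stabilizer G S) : ⁅k, g⁆ ∈ fixingSubgroup G S := by
  refine mem_fixingSubgroup_iff G |>.2 fun x hx ↦ ?_
  have hgx : g⁻¹ • x ∈ S := (inv_mem hg : g⁻¹ • S = S).subset (smul_mem_smul_set hx)
  have k_inv_smul : k⁻¹ • g⁻¹ • x = g⁻¹ • x := inv_mem hk ⟨_, hgx⟩
  rw [commutatorElement_def, mul_smul, mul_smul, mul_smul, k_inv_smul, smul_inv_smul]
  exact hk ⟨x, hx⟩

theorem exists_mem_fixingSubgroup_biUnion {Γ : Subgroup G} {σ : κ → G} {P O Q : κ → Set Ω}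
    {s : Finset κ} (hσ : ∀ i ∈ s, σ i ∈ Γ) (hQ : ∀ i ∈ s, Γ ≤ MulAction.stabilizer G (Q i))
    (hσQ : ∀ i ∈ s, σ i ∈ fixingSubgroup G (Q i)) (hPO : ∀ i ∈ s, σ i • P i ⊆ O i)
    (hPP : (s : Set κ).Pairwise fun i j ↦ σ i • P j ⊆ P j) {E : Set Ω} (hE : E.Finite)
    (hEP : ∀ i ∈ s, E ⊆ P i) :
    ∃ F, F.Finite ∧ F ⊆ ⋃ i ∈ s, O i ∧ ∀ g ∈ Γ ⊓ fixingSubgroup G F,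
      ∃ k ∈ Γ, (∀ i ∈ s, k ∈ fixingSubgroup G (Q i)) ∧ EqOn (k • ·) (g • ·) E := by
  classical
  induction s using Finset.induction_on generalizing E with
  | empty => exact ⟨∅, finite_empty, empty_subset _, fun g hg ↦ ⟨g, hg.1, by simp, fun _ _ ↦ rfl⟩⟩
  | insert i s his ih =>
    simp only [Finset.forall_mem_insert, Finset.coe_insert] at *
    have hsi {j} (hj : j ∈ s) : i ≠ j := fun h ↦ his (h ▸ hj)
    obtain ⟨F, hF, hFO, h⟩ := ih hσ.2 hQ.2 hσQ.2 hPO.2 (hPP.mono (subset_insert _ _))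
      (hE.union (hE.smul_set (a := σ i))) fun j hj ↦ union_subset (hEP.2 j hj)
        ((smul_set_mono (hEP.2 j hj)).trans (hPP (mem_insert _ _) (.inr hj) (hsi hj)))
    refine ⟨F ∪ σ i • E, hF.union hE.smul_set, ?_, fun g ⟨hgΓ, hgF⟩ ↦ ?_⟩
    · rw [Finset.set_biUnion_insert, union_comm]
      exact union_subset_union ((smul_set_mono hEP.1).trans hPO.1) hFO
    rw [fixingSubgroup_union] at hgF
    obtain ⟨k, hkΓ, hkQ, hkE⟩ := h g ⟨hgΓ, hgF.1⟩
    refine ⟨⁅k, (σ i)⁻¹⁆, ?_, ⟨?_, fun j hj ↦ ?_⟩, fun x hx ↦ ?_⟩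
    · exact mul_mem (mul_mem (mul_mem hkΓ (inv_mem hσ.1)) (inv_mem hkΓ)) (inv_mem (inv_mem hσ.1))
    · rw [← commutatorElement_inv]
      exact inv_mem (commutatorElement_mem_fixingSubgroup (inv_mem hσQ.1) (hQ.1 hkΓ))
    · exact commutatorElement_mem_fixingSubgroup (hkQ j hj) (inv_mem (hQ.2 j hj hσ.1))
    · have k_smul : k • σ i • x = σ i • x :=
        (hkE (.inr (smul_mem_smul_set hx))).trans (hgF.2 ⟨_, smul_mem_smul_set hx⟩)
      calc ⁅k, (σ i)⁻¹⁆ • x = k • (σ i)⁻¹ • k⁻¹ • σ i • x := by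
            simp only [commutatorElement_def, mul_smul, inv_inv]
        _ = k • x := by rw [inv_smul_eq_iff.2 k_smul.symm, inv_smul_smul]
        _ = g • x := hkE (.inl hx)

end Commutator

/-- The part of the closure of `u '' T` spanned without using some element of `X`, together with
the points `u x` for `x ∈ X`. A map defined at the stage `T` has to agree with what is already known
on the crown. -/
def crown {α ι : Type*} (cl : Set α → Set α) (u : ι → α) (T : Set ι) (X : Finset ι) : Set α :=
  u '' X ∪ ⋃ x ∈ X, cl (u '' (T \ {x}))

lemma IsPregeometry.image_subset_crown {α ι : Type*} {cl : Set α → Set α} (h : IsPregeometry cl)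
    {u : ι → α} {T : Set ι} {X : Finset ι} (hX : X.Nonempty) : u '' T ⊆ crown cl u T X := by
  rintro _ ⟨k, hk, rfl⟩
  obtain ⟨x, hx⟩ := hX
  rcases eq_or_ne k x with rfl | hkx
  · exact .inl (mem_image_of_mem u hx)
  · exact .inr (mem_biUnion hx (h.subset_cl _ ⟨k, ⟨hk, hkx⟩, rfl⟩))

lemma IsPregeometry.cl_image_subset_crown {α ι : Type*} {cl : Set α → Set α}
    (h : IsPregeometry cl) {u : ι → α} {W : Set ι} {X : Finset ι} (hXW : ¬ ↑X ⊆ W) :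
    cl (u '' W) ⊆ crown cl u Set.univ X := by
  obtain ⟨x, hx, hxW⟩ := not_subset.1 hXW
  exact fun y hy ↦ .inr (mem_biUnion hx
    (h.mono (image_mono (subset_sdiff_singleton (subset_univ W) hxW)) hy))

lemma IsPregeometry.exists_finite_subset_crown {α ι : Type*} {cl : Set α → Set α}
    (h : IsPregeometry cl) {u : ι → α} {T : Set ι} {X : Finset ι} {c : Set α} (hc : c.Finite)
    (hcT : c ⊆ crown cl u T X) : ∃ D ⊆ T, D.Finite ∧ c ⊆ crown cl u D X := by
  choose D hDT hD hcD using fun x ↦ h.exists_finite_subset u (T := T \ {x})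
    (hc.inter_of_left (cl (u '' (T \ {x})))) inter_subset_right
  refine ⟨⋃ x ∈ X, D x, iUnion₂_subset fun x _ ↦ (hDT x).trans sdiff_subset,
    X.finite_toSet.biUnion fun x _ ↦ hD x, fun y hy ↦ (hcT hy).imp_right fun hyX ↦ ?_⟩
  obtain ⟨x, hx, hyx⟩ := mem_iUnion₂.1 hyX
  refine mem_biUnion hx (h.mono (image_mono ?_) (hcD x ⟨hy, hyx⟩))
  exact subset_sdiff_singleton (subset_biUnion_of_mem (u := D) (Finset.mem_coe.2 hx))
    fun hxD ↦ (hDT x hxD).2 rfl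

lemma exists_injOn_union_eqOn_id {ι : Type*} {D D' S : Set ι} (hD' : D'.Finite)
    (hS : S.Infinite) (hDS : Disjoint D S) :
    ∃ π : ι → ι, InjOn π (D ∪ D') ∧ EqOn π id D ∧ MapsTo π (D' \ D) S := by
  classical
  have : Nonempty ι := ⟨hS.nonempty.some⟩
  obtain ⟨f, hf, hinj⟩ := (hD'.sdiff (t := D)).exists_injOn_of_encard_le (t := S)
    (hS.encard_eq ▸ le_top)
  have hid : EqOn (D.piecewise id f) id D := D.piecewise_eqOn id f
  have hf' : EqOn (D.piecewise id f) f (D' \ D) := (D.piecewise_eqOn_compl id f).mono fun _ h ↦ h.2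
  refine ⟨D.piecewise id f, ?_, hid, fun i hi ↦ hf' hi ▸ hf hi⟩
  rw [← union_sdiff_self, injOn_union disjoint_sdiff_right]
  refine ⟨hid.injOn_iff.2 (injOn_id D), hf'.injOn_iff.2 hinj, fun i hi j hj hij ↦ ?_⟩
  rw [hid hi, hf' hj] at hij
  exact disjoint_left.1 hDS hi (hij.symm.subst (motive := (· ∈ S)) (hf hj))

section Isolation

open scoped Pointwise

variable {C : Set (QMObj.{u} L)} {H : QMObj.{u} L} {ι : Type*} {a : ι → H.carrier} {T D : Set ι}
  {X : Finset ι} {pr : ι → ι} {E : Set H.carrier}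

lemma IsSpanIso.graphOn_id (h : IsPregeometry H.cl) {τ : ι → ι} (hτ : EqOn τ id D) :
    IsSpanIso H H a (a ∘ τ) D ((H.cl (a '' D)).graphOn id) where
  isPartialEmbedding := .graphOn_id _
  pdom_eq := image_fst_graphOn _ _
  pimg_eq := by
    rw [pimg, image_snd_graphOn, image_id]
    exact congrArg H.cl (image_congr fun k hk ↦ (congrArg a (hτ hk)).symm)
  mem k hk := mem_graphOn.2 ⟨h.subset_cl _ (mem_image_of_mem a hk), (congrArg a (hτ hk)).symm⟩

lemma IsQMClass.exists_reflection (hC : IsQMClass C) (hH : H ∈ C) (hT : T.Countable)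
    (ha : IndepOn H.cl a T) {i j : ι} (hi : i ∈ T) (hj : j ∈ T) :
    ∃ σ ∈ partialAut L (H.cl (a '' T)), (∀ z ∈ H.cl (a '' (T \ {i, j})), σ z = z) ∧
      σ '' H.cl (a '' (T \ {j})) = H.cl (a '' (T \ {i})) ∧
      ∀ J ⊆ T, (i ∈ J ↔ j ∈ J) → σ '' H.cl (a '' J) = H.cl (a '' J) := by
  classical
  have swap_eqOn : EqOn (Equiv.swap i j) id (T \ {i, j}) := fun k hk ↦
    Equiv.swap_apply_of_ne_of_ne (fun h ↦ hk.2 (.inl h)) fun h ↦ hk.2 (.inr h)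
  have swap_bijOn {J : Set ι} (hJ : i ∈ J ↔ j ∈ J) := Equiv.swap_bijOn_self hJ
  obtain ⟨σ, hσ, hfix, hσa⟩ := (IsSpanIso.graphOn_id (hC.pregeom H hH) swap_eqOn)
    |>.exists_mem_partialAut hC hH sdiff_subset hT ha (swap_bijOn (iff_of_true hi hj))
  refine ⟨σ, hσ, fun z hz ↦ hfix (z, z) (mem_graphOn.2 ⟨hz, rfl⟩), ?_, fun J hJT hJ ↦ ?_⟩
  · rw [hC.image_cl_image hH hσ hσa sdiff_subset, image_sdiff (Equiv.injective _),
      image_singleton, Equiv.swap_apply_right, (swap_bijOn (iff_of_true hi hj)).image_eq]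
  · rw [hC.image_cl_image hH hσ hσa hJT, (swap_bijOn hJ).image_eq]

lemma IsQMClass.exists_finite_forall_exists_partialAut_eqOn (hC : IsQMClass C) (hH : H ∈ C)
    (hT : T.Countable) (ha : IndepOn H.cl a T) (hXT : ↑X ⊆ T) (hpr : MapsTo pr X (T \ X))
    (hinj : InjOn pr X) (hE : E.Finite) (hEpr : ∀ x ∈ X, E ⊆ H.cl (a '' (T \ {pr x}))) :
    ∃ F, F.Finite ∧ F ⊆ ⋃ x ∈ X, H.cl (a '' (T \ {x})) ∧ ∀ g ∈ partialAut L (H.cl (a '' T)),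
      (∀ k ∈ T, g (a k) = a k) → (∀ z ∈ F, g z = z) → ∃ k ∈ partialAut L (H.cl (a '' T)),
        (∀ x ∈ X, ∀ z ∈ H.cl (a '' (T \ {x, pr x})), k z = z) ∧ ∀ z ∈ E, k z = g z := by
  have reflection (x) (hx : x ∈ X) := hC.exists_reflection hH hT ha (hXT hx) (hpr hx).1
  choose! σ hσ hσQ hσP hσJ using reflection
  have pr_ne {i j} (hi : i ∈ X) (hj : j ∈ X) : pr i ≠ j := fun h ↦ (hpr hi).2 (h ▸ hj)
  have hσPP : (X : Set ι).Pairwise fun i j ↦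
      σ i '' H.cl (a '' (T \ {pr j})) ⊆ H.cl (a '' (T \ {pr j})) := fun i hi j hj hij ↦
    (hσJ i hi _ sdiff_subset (by
      simp [hXT hi, (hpr hi).1, (pr_ne hj hi).symm, hinj.ne hi hj hij])).subset
  let Q (x : ι) := H.cl (a '' (T \ {x, pr x}))
  have hσQQ (i) (hi : i ∈ X) (j) (hj : j ∈ X) : σ i '' Q j = Q j := by
    refine hσJ i hi _ sdiff_subset ?_
    rcases eq_or_ne i j with rfl | hij
    · simp
    · simp [hXT hi, (hpr hi).1, hij, pr_ne hi hj, (pr_ne hj hi).symm, hinj.ne hi hj hij]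
  let Γ := partialAut L (H.cl (a '' T)) ⊓
    ⨅ x ∈ X, MulAction.stabilizer (Equiv.Perm H.carrier) (Q x)
  have mem_Γ {g} : g ∈ Γ ↔ g ∈ partialAut L (H.cl (a '' T)) ∧ ∀ x ∈ X, g '' Q x = Q x := by
    simp only [Γ, Subgroup.mem_inf, Subgroup.mem_iInf, MulAction.mem_stabilizer_iff]
    rfl
  obtain ⟨F, hF, hFX, h⟩ := exists_mem_fixingSubgroup_biUnion (Γ := Γ)
    (fun i hi ↦ mem_Γ.2 ⟨hσ i hi, hσQQ i hi⟩) (fun i hi ↦ inf_le_right.trans (iInf₂_le i hi))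
    (fun i hi ↦ (mem_fixingSubgroup_iff _).2 (hσQ i hi)) (fun i hi ↦ (hσP i hi).subset)
    hσPP hE hEpr
  refine ⟨F, hF, hFX, fun g hg hga hgF ↦ ?_⟩
  have hgΓ : g ∈ Γ := mem_Γ.2 ⟨hg, fun x _ ↦
    (hC.image_cl_image hH (τ := id) hg hga sdiff_subset).trans (by rw [image_id])⟩
  obtain ⟨k, hk, hkQ, hkE⟩ := h g ⟨hgΓ, (mem_fixingSubgroup_iff _).2 hgF⟩
  exact ⟨k, hk.1, fun x hx ↦ (mem_fixingSubgroup_iff _).1 (hkQ x hx), hkE⟩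

lemma IsQMClass.exists_finite_forall_exists_partialAut_extending (hC : IsQMClass C) (hH : H ∈ C)
    (hT : T.Countable) (ha : IndepOn H.cl a T) (hX : X.Nonempty) (hXD : ↑X ⊆ D) (hDT : D ⊆ T)
    (hD : D.Finite) (hpr : MapsTo pr X (T \ D)) (hinj : InjOn pr X) (hE : E.Finite)
    (hED : E ⊆ H.cl (a '' D)) :
    ∃ A, A.Finite ∧ a '' D ⊆ A ∧ A ⊆ crown H.cl a T X ∧
      ∀ q : Set (H.carrier × H.carrier), IsPartialEmbedding (L := L) q → A.graphOn id ⊆ q →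
        ∃ k ∈ partialAut L (H.cl (a '' T)), (∀ z ∈ q, z.1 ∈ E → k z.1 = z.2) ∧
          ∀ x ∈ X, ∀ y ∈ H.cl (a '' (T \ {x, pr x})), k y = y := by
  have h := hC.pregeom H hH
  obtain ⟨F, hF, hFX, lift⟩ := hC.exists_finite_forall_exists_partialAut_eqOn hH hT ha
    (hXD.trans hDT) (hpr.mono_right (sdiff_subset_sdiff_right hXD)) hinj hE fun x hx ↦
      hED.trans (h.mono (image_mono (subset_sdiff_singleton hDT (hpr hx).2)))
  obtain ⟨D', hD'T, hD', hFD'⟩ := h.exists_finite_subset a hF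
    (hFX.trans (iUnion₂_subset fun x _ ↦ h.mono (image_mono sdiff_subset)))
  have hA : (F ∪ a '' (D ∪ D')).Finite := hF.union ((hD.union hD').image a)
  refine ⟨F ∪ a '' (D ∪ D'), hA, (image_mono subset_union_left).trans subset_union_right,
    union_subset (hFX.trans subset_union_right)
      ((image_mono (union_subset hDT hD'T)).trans (h.image_subset_crown hX)), fun q hq hqA ↦ ?_⟩
  have mem_q {y} (hy : y ∈ F ∪ a '' (D ∪ D')) : (y, y) ∈ q := hqA (mem_graphOn.2 ⟨hy, rfl⟩)
  obtain ⟨g, hg, hgq, hga⟩ := hC.exists_mem_partialAut hH hT ha (union_subset hDT hD'T)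
    (hq.mono inter_subset_left) (hq.finite_inter_fst_preimage (hE.union hA))
    (fun k hk ↦ ⟨mem_q (.inr (mem_image_of_mem a hk)), .inr (.inr (mem_image_of_mem a hk))⟩)
    (image_subset_iff.2 fun z hz ↦ union_subset (hED.trans (h.mono (image_mono subset_union_left)))
      (union_subset (hFD'.trans (h.mono (image_mono subset_union_right))) (h.subset_cl _)) hz.2)
  obtain ⟨k, hk, hkX, hkE⟩ := lift g hg hga fun y hy ↦ hgq (y, y) ⟨mem_q (.inl hy), .inr (.inl hy)⟩
  exact ⟨k, hk, fun z hz hzE ↦ (hkE _ hzE).trans (hgq z ⟨hz, .inl hzE⟩), hkX⟩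

lemma IsQMClass.exists_relocation (hC : IsQMClass C) (hH : H ∈ C)
    (ha : IndepOn H.cl a Set.univ) (hT : T.Infinite) (hXD : ↑X ⊆ D) (hDT : D ⊆ T) (hD : D.Finite)
    (hpr : MapsTo pr X (T \ D)) {c : Set H.carrier} (hc : c.Finite)
    (hcX : c ⊆ crown H.cl a Set.univ X) :
    ∃ p, IsPartialEmbedding (L := L) p ∧ (H.cl (a '' D)).graphOn id ⊆ p ∧
      ∀ y ∈ c, ∃ z, (y, z) ∈ p ∧ z ∈ a '' X ∪ ⋃ x ∈ X, H.cl (a '' (T \ {x, pr x})) := by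
  have h := hC.pregeom H hH
  obtain ⟨D', -, hD', hcD'⟩ := h.exists_finite_subset_crown hc hcX
  obtain ⟨π, hπ, hπD, hπD'⟩ := exists_injOn_union_eqOn_id hD'
    (hT.sdiff (hD.union (X.finite_toSet.image pr)))
    (disjoint_sdiff_right.mono_left (subset_union_left (t := pr '' X)))
  obtain ⟨p, hDp, hp⟩ := (IsSpanIso.graphOn_id h hπD).exists_extension hC hH hH subset_union_left
    (hD.union hD').countable (ha.mono h (subset_univ _)) (ha.comp h hπ (mapsTo_univ _ _))
  refine ⟨p, hp.isPartialEmbedding, hDp, fun y hy ↦ ?_⟩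
  rcases hcD' hy with hyX | hyX
  · exact ⟨y, hDp (mem_graphOn.2 ⟨h.subset_cl _ (image_mono hXD hyX), rfl⟩), .inl hyX⟩
  obtain ⟨x, hx, hyx⟩ := mem_iUnion₂.1 hyX
  have hD'x : D' \ {x} ⊆ D ∪ D' := sdiff_subset.trans subset_union_right
  obtain ⟨z, hyz⟩ := mem_pdom.1 (hp.pdom_eq.ge (h.mono (image_mono hD'x) hyx))
  have hz := (hC.mem_cl_image_iff hH hH hp.isPartialEmbedding (fun k hk ↦ hp.mem k (hD'x hk))
    hyz).1 hyx
  rw [image_comp] at hz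
  refine ⟨z, hyz, .inr (mem_biUnion hx (h.mono (image_mono ?_) hz))⟩
  rintro _ ⟨i, ⟨hi, hix⟩, rfl⟩
  by_cases hiD : i ∈ D
  · rw [hπD hiD]
    exact ⟨hDT hiD, fun h ↦ h.elim hix fun h ↦ (hpr hx).2 (h ▸ hiD)⟩
  · obtain ⟨hiT, hiDX⟩ := hπD' ⟨hi, hiD⟩
    exact ⟨hiT, fun h ↦ hiDX (h.imp (fun h ↦ h.symm.subst (hXD hx)) fun h ↦ ⟨x, hx, h.symm⟩)⟩

theorem IsQMClass.exists_finite_isPartialEmbedding_crown (hC : IsQMClass C) (hH : H ∈ C)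
    (ha : IndepOn H.cl a Set.univ) (hT : T.Countable) (hT' : T.Infinite) (hX : X.Nonempty)
    (hXT : ↑X ⊆ T) (hE : E.Finite) (hET : E ⊆ H.cl (a '' T)) :
    ∃ A, A.Finite ∧ A ⊆ crown H.cl a T X ∧ E ⊆ H.cl A ∧
      ∀ q : Set (H.carrier × H.carrier), IsPartialEmbedding (L := L) q → A.graphOn id ⊆ q →
        IsPartialEmbedding (L := L)
          (q ∩ Prod.fst ⁻¹' E ∪ (crown H.cl a Set.univ X).graphOn id) := by
  have h := hC.pregeom H hH
  obtain ⟨D', hD'T, hD', hED'⟩ := h.exists_finite_subset a hE hET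
  obtain ⟨D, hD, hDT, hXD, hED⟩ : ∃ D : Set ι, D.Finite ∧ D ⊆ T ∧ ↑X ⊆ D ∧ E ⊆ H.cl (a '' D) :=
    ⟨X ∪ D', X.finite_toSet.union hD', union_subset hXT hD'T, subset_union_left,
      hED'.trans (h.mono (image_mono subset_union_right))⟩
  have haXD : a '' X ⊆ H.cl (a '' D) := (image_mono hXD).trans (h.subset_cl _)
  have : Nonempty ι := ⟨hX.choose⟩
  obtain ⟨pr, hpr, hinj⟩ := X.finite_toSet.exists_injOn_of_encard_le (t := T \ D)
    ((hT'.sdiff hD).encard_eq ▸ le_top)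
  obtain ⟨A, hA, hDA, hAX, hq⟩ := hC.exists_finite_forall_exists_partialAut_extending hH hT
    (ha.mono h (subset_univ T)) hX hXD hDT hD hpr hinj (hE.union (X.finite_toSet.image a))
    (union_subset hED haXD)
  refine ⟨A, hA, hAX, hED.trans (h.mono hDA), fun q hqPE hqA ↦ .of_finite fun r hr hrfin ↦ ?_⟩
  have mem_q {y} (hy : y ∈ A) : (y, y) ∈ q := hqA (mem_graphOn.2 ⟨hy, rfl⟩)
  obtain ⟨k, hk, hkq, hkX⟩ := hq q hqPE hqA
  obtain ⟨p, hp, hDp, hpc⟩ := hC.exists_relocation hH ha hT' hXD hDT hD hpr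
    (c := pdom r ∩ crown H.cl a Set.univ X) ((hrfin.image _).inter_of_left _) inter_subset_right
  -- `r` is part of the conjugate of `k` by `p`, as `p` moves the crown points involved in `r` to
  -- points fixed by `k`
  refine ((hp.comp hk.2).comp hp.inv).mono ?_
  have p_id {y} (hy : y ∈ H.cl (a '' D)) : (y, y) ∈ p := hDp (mem_graphOn.2 ⟨hy, rfl⟩)
  rintro ⟨y, y'⟩ hz
  rcases hr hz with ⟨hyq, hyE⟩ | hyc
  · have hy' : y' ∈ H.cl (a '' D) := (hC.mem_cl_image_iff hH hH hqPE
      (fun i hi ↦ mem_q (hDA (mem_image_of_mem a hi))) hyq).1 (hED hyE)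
    have hyN : y ∈ H.cl (a '' T) := hET hyE
    exact ⟨y', ⟨y, p_id (hED hyE), mem_graphOn.2 ⟨hyN, hkq _ hyq (.inl hyE)⟩⟩, p_id hy'⟩
  · obtain ⟨hyX, rfl : y = y'⟩ := mem_graphOn.1 hyc
    obtain ⟨z, hyz, hzX⟩ := hpc y ⟨mem_image_of_mem Prod.fst hz, hyX⟩
    have hzk : z ∈ H.cl (a '' T) ∧ k z = z := by
      rcases hzX with hzX | hzX
      · exact ⟨h.mono (image_mono hDT) (haXD hzX),
          hkq (z, z) (mem_q (hDA (image_mono hXD hzX))) (.inr hzX)⟩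
      · obtain ⟨x, hx, hzx⟩ := mem_iUnion₂.1 hzX
        exact ⟨h.mono (image_mono sdiff_subset) hzx, hkX x hx z hzx⟩
    exact ⟨z, ⟨z, hyz, mem_graphOn.2 hzk⟩, hyz⟩

end Isolation

section Extension

variable {C : Set (QMObj.{u} L)} {H H' : QMObj.{u} L} {ι : Type*} {a : ι → H.carrier}
  {b : ι → H'.carrier} {T : Set ι} {X : Finset ι} {f : Set (H.carrier × H'.carrier)}

lemma IsQMClass.exists_insert_of_crown_subset (hC : IsQMClass C) (hH : H ∈ C) (hH' : H' ∈ C)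
    (ha : IndepOn H.cl a Set.univ) (hT : T.Countable) (hT' : T.Infinite) (hX : X.Nonempty)
    (hXT : ↑X ⊆ T) (hTf : crown H.cl a T X ⊆ pdom f) (hfX : pdom f ⊆ crown H.cl a Set.univ X)
    {r : Set (H.carrier × H'.carrier)} (hr : r.Finite) (hrT : pdom r ⊆ H.cl (a '' T))
    (hfr : IsPartialEmbedding (L := L) (f ∪ r)) {x : H.carrier} (hx : x ∈ H.cl (a '' T)) :
    ∃ y, IsPartialEmbedding (L := L) (f ∪ r ∪ {(x, y)}) := by
  obtain ⟨A, hA, hAX, hEA, isolates⟩ := hC.exists_finite_isPartialEmbedding_crown hH ha hT hT' hX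
    hXT ((hr.image Prod.fst).insert x) (insert_subset hx hrT)
  have hempty : CCOE H (pdom (∅ : Set (H.carrier × H'.carrier))) := .inr (image_empty _)
  have hempty' : CCOE H' (pimg (∅ : Set (H.carrier × H'.carrier))) := .inr (image_empty _)
  let f₀ := f ∩ Prod.fst ⁻¹' A ∪ r
  have hf₀ : f₀.Finite :=
    ((hfr.mono subset_union_left).finite_inter_fst_preimage hA).union hr
  have hf₀f : f₀ ⊆ f ∪ r := union_subset_union_left r inter_subset_left
  have hAf₀ {z} (hz : z ∈ A) : ∃ w, (z, w) ∈ f₀ :=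
    (mem_pdom.1 (hTf (hAX hz))).imp fun w hw ↦ .inl ⟨hw, hz⟩
  have hx₀ : x ∈ H.cl (pdom f₀) :=
    (hC.pregeom H hH).mono (fun z hz ↦ mem_pdom.2 (hAf₀ hz)) (hEA (mem_insert x _))
  obtain ⟨y, hy, hxy⟩ := hC.exists_forth hH hH' hempty hempty' hf₀
    (by rw [empty_union]; exact hfr.mono hf₀f) subset_union_right hx₀
  refine ⟨y, .of_finite fun t ht htfin ↦ ?_⟩
  -- the value `y` depends on `f₀` only; the isolation of the type of `x` carries `x'`, which is a
  -- preimage of `y` over the finite part `t ∩ f`, back to `x` itself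
  obtain ⟨x', -, hxy'⟩ := hC.exists_back hH hH' hempty hempty'
    (hf₀.union (htfin.inter_of_left f)) (by
      rw [empty_union]
      exact hfr.mono (union_subset hf₀f (inter_subset_right.trans subset_union_left)))
    (subset_union_left.trans subset_union_right) hy
  rw [empty_union] at hxy' hxy
  have h := isolates _ (hxy.comp hxy'.inv) (by
    rintro _ ⟨z, hz, rfl⟩
    obtain ⟨w, hw⟩ := hAf₀ hz
    exact ⟨w, .inl hw, .inl (.inl hw)⟩)
  refine (h.comp hxy').mono ?_
  rintro ⟨z, w⟩ hzw
  rcases ht hzw with (hf | hr) | hz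
  · exact ⟨z, .inr (mem_graphOn.2 ⟨hfX (mem_pdom.2 ⟨w, hf⟩), rfl⟩), .inl (.inr ⟨hzw, hf⟩)⟩
  · exact ⟨z, .inl ⟨⟨w, .inl (.inr hr), .inl (.inl (.inr hr))⟩, .inr (mem_pdom.2 ⟨w, hr⟩)⟩,
      .inl (.inl (.inr hr))⟩
  · obtain ⟨rfl, rfl⟩ := Prod.mk.inj hz
    exact ⟨x', .inl ⟨⟨w, .inr rfl, .inr rfl⟩, .inl rfl⟩, .inr rfl⟩

theorem IsQMClass.exists_extension_of_crown_subset (hC : IsQMClass C) (hH : H ∈ C) (hH' : H' ∈ C)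
    (ha : IndepOn H.cl a Set.univ) (hb : IndepOn H'.cl b Set.univ) (hT : T.Countable)
    (hT' : T.Infinite) (hX : X.Nonempty) (hXT : ↑X ⊆ T) (hf : IsPartialEmbedding (L := L) f)
    (hab : ∀ i ∈ T, (a i, b i) ∈ f)
    (hdom : crown H.cl a T X ⊆ pdom f) (hdom' : pdom f ⊆ crown H.cl a Set.univ X)
    (himg : crown H'.cl b T X ⊆ pimg f) (himg' : pimg f ⊆ crown H'.cl b Set.univ X) :
    ∃ g, IsPartialEmbedding (L := L) g ∧ f ⊆ g ∧ g ⊆ f ∪ H.cl (a '' T) ×ˢ H'.cl (b '' T) ∧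
      H.cl (a '' T) ⊆ pdom g ∧ H'.cl (b '' T) ⊆ pimg g := by
  refine hf.exists_back_and_forth (hC.countable_cl hH (hT.image a))
    (hC.countable_cl hH' (hT.image b)) ?_ ?_
  · intro r hrT hr hfr x hx
    obtain ⟨y, hy⟩ := hC.exists_insert_of_crown_subset hH hH' ha hT hT' hX hXT hdom hdom' hr
      (image_subset_iff.2 fun z hz ↦ (hrT hz).1) hfr hx
    exact ⟨y, (hC.mem_cl_image_iff hH hH' hy (fun i hi ↦ .inl (.inl (hab i hi))) (.inr rfl)).1 hx,
      hy⟩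
  · intro r hrT hr hfr y hy
    rw [← pdom_inv] at himg himg'
    obtain ⟨x, hx⟩ := hC.exists_insert_of_crown_subset hH' hH hb hT hT' hX hXT himg himg'
      (hr.preimage Prod.swap_injective.injOn) (image_subset_iff.2 fun z hz ↦ (hrT hz).2)
      hfr.inv hy
    have hxy : IsPartialEmbedding (L := L) (f ∪ r ∪ {(x, y)}) :=
      hx.inv.mono (union_subset_union_right _ (singleton_subset_iff.2 rfl))
    exact ⟨x, (hC.mem_cl_image_iff hH hH' hxy (fun i hi ↦ .inl (.inl (hab i hi))) (.inr rfl)).2 hy,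
      hxy⟩

end Extension

section Stages

variable {C : Set (QMObj.{u} L)} {H H' : QMObj.{u} L} {ι : Type*} {a : ι → H.carrier}
  {b : ι → H'.carrier} {S T : Set ι} {f g : Set (H.carrier × H'.carrier)}

/-- The relation `f` is defined on all of the stage `cl (a '' T)`, and reaches all of
`cl (b '' T)`. -/
def Covers (H H' : QMObj.{u} L) (a : ι → H.carrier) (b : ι → H'.carrier) (T : Set ι)
    (f : Set (H.carrier × H'.carrier)) : Prop :=
  H.cl (a '' T) ⊆ pdom f ∧ H'.cl (b '' T) ⊆ pimg f

lemma Covers.mono (hf : Covers H H' a b T f) (hfg : f ⊆ g) : Covers H H' a b T g :=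
  ⟨hf.1.trans (image_mono hfg), hf.2.trans (image_mono hfg)⟩

lemma Covers.anti (hf : Covers H H' a b T f) (h : IsPregeometry H.cl) (h' : IsPregeometry H'.cl)
    (hST : S ⊆ T) : Covers H H' a b S f :=
  ⟨(h.mono (image_mono hST)).trans hf.1, (h'.mono (image_mono hST)).trans hf.2⟩

/-- A partial embedding containing the pairs `(a i, b i)` and otherwise composed of complete
stages above `S`: this is the kind of map to which Zorn's lemma is applied, since any further
stage that is minimal among the missing ones meets it in its crown only. -/
structure IsStaged (H H' : QMObj.{u} L) (a : ι → H.carrier) (b : ι → H'.carrier) (S : Set ι)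
    (f : Set (H.carrier × H'.carrier)) : Prop where
  isPartialEmbedding : IsPartialEmbedding (L := L) f
  mem : ∀ i, (a i, b i) ∈ f
  mem_stage : ∀ z ∈ f, z ∈ range (fun i ↦ (a i, b i)) ∨
    ∃ W ⊇ S, Covers H H' a b W f ∧ z ∈ H.cl (a '' W) ×ˢ H'.cl (b '' W)

lemma IsQMClass.exists_isStaged (hC : IsQMClass C) (hH : H ∈ C) (hH' : H' ∈ C)
    (ha : IndepOn H.cl a Set.univ) (hb : IndepOn H'.cl b Set.univ) (hS : S.Countable) :
    ∃ f, IsStaged H H' a b S f ∧ Covers H H' a b S f := by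
  have indep (I) : IndepOn H.cl a I := ha.mono (hC.pregeom H hH) (subset_univ I)
  have indep' (I) : IndepOn H'.cl b I := hb.mono (hC.pregeom H' hH') (subset_univ I)
  obtain ⟨p, hp⟩ := hC.exists_isSpanIso hH hH' hS (indep S) (indep' S)
  let ab (i : ι) := (a i, b i)
  have hcov : Covers H H' a b S (p ∪ range ab) :=
    Covers.mono ⟨hp.pdom_eq.ge, hp.pimg_eq.ge⟩ subset_union_left
  refine ⟨p ∪ range ab, ⟨.of_finite fun q hq hqfin ↦ ?_, fun i ↦ .inr ⟨i, rfl⟩, ?_⟩, hcov⟩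
  · obtain ⟨J, -, hJ, hqJ⟩ := exists_subset_image_finite_and (p := (q ⊆ p ∪ ·)).1
      ⟨q \ p, by rwa [image_univ, sdiff_subset_iff], hqfin.sdiff, sdiff_subset_iff.1 subset_rfl⟩
    obtain ⟨r, hpr, hr⟩ := hp.exists_extension hC hH hH' subset_union_left
      (hS.union hJ.countable) (indep (S ∪ J)) (indep' (S ∪ J))
    exact hr.isPartialEmbedding.mono (hqJ.trans
      (union_subset hpr (image_subset_iff.2 fun i hi ↦ hr.mem i (.inr hi))))
  · exact fun z hz ↦ hz.symm.imp_right fun hz ↦ ⟨S, subset_rfl, hcov,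
      hp.pdom_eq.subset (mem_image_of_mem _ hz), hp.pimg_eq.subset (mem_image_of_mem _ hz)⟩

namespace IsStaged

lemma sUnion {c : Set (Set (H.carrier × H'.carrier))} (hne : c.Nonempty)
    (hdir : DirectedOn (· ⊆ ·) c) (hc : ∀ r ∈ c, IsStaged H H' a b S r) :
    IsStaged H H' a b S (⋃₀ c) where
  isPartialEmbedding := .sUnion hne hdir fun r hr ↦ (hc r hr).isPartialEmbedding
  mem i := hne.elim fun r hr ↦ ⟨r, hr, (hc r hr).mem i⟩
  mem_stage := fun z ⟨r, hr, hz⟩ ↦ ((hc r hr).mem_stage z hz).imp_right fun ⟨W, hSW, hW, hzW⟩ ↦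
    ⟨W, hSW, hW.mono (subset_sUnion_of_mem hr), hzW⟩

lemma exists_maximal (hf : IsStaged H H' a b S f) :
    ∃ m, f ⊆ m ∧ Maximal (IsStaged H H' a b S) m :=
  zorn_subset_nonempty {r | IsStaged H H' a b S r} (fun c hcS hc hne ↦
    ⟨⋃₀ c, sUnion hne hc.directedOn hcS, fun _ ↦ subset_sUnion_of_mem⟩) f hf

lemma extend (hf : IsStaged H H' a b S f) (hg : IsPartialEmbedding (L := L) g) (hfg : f ⊆ g)
    (hgT : g ⊆ f ∪ H.cl (a '' T) ×ˢ H'.cl (b '' T)) (hST : S ⊆ T) (hT : Covers H H' a b T g) :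
    IsStaged H H' a b S g where
  isPartialEmbedding := hg
  mem i := hfg (hf.mem i)
  mem_stage z hz := (hgT hz).elim
    (fun hz ↦ (hf.mem_stage z hz).imp_right fun ⟨W, hSW, hW, hzW⟩ ↦ ⟨W, hSW, hW.mono hfg, hzW⟩)
    fun hz ↦ .inr ⟨T, hST, hT, hz⟩

lemma subset_crown_prod_crown (hf : IsStaged H H' a b S f) (h : IsPregeometry H.cl)
    (h' : IsPregeometry H'.cl) {X : Finset ι} (hX : X.Nonempty)
    (hfX : ¬ Covers H H' a b (S ∪ X) f) :
    f ⊆ crown H.cl a Set.univ X ×ˢ crown H'.cl b Set.univ X := by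
  intro z hz
  obtain ⟨i, rfl⟩ | ⟨W, hSW, hW, hzW⟩ := hf.mem_stage z hz
  · exact ⟨h.image_subset_crown hX (mem_image_of_mem a (mem_univ i)),
      h'.image_subset_crown hX (mem_image_of_mem b (mem_univ i))⟩
  · have hXW : ¬ ↑X ⊆ W := fun hXW ↦ hfX (hW.anti h h' (union_subset hSW hXW))
    exact ⟨h.cl_image_subset_crown hXW hzW.1, h'.cl_image_subset_crown hXW hzW.2⟩

lemma exists_covers (hf : IsStaged H H' a b S f) (hC : IsQMClass C) (hH : H ∈ C) (hH' : H' ∈ C)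
    (ha : IndepOn H.cl a Set.univ) (hb : IndepOn H'.cl b Set.univ) (hS : S.Countable)
    (hS' : S.Infinite) {X : Finset ι} (hX : X.Nonempty)
    (hfX : ∀ x ∈ X, Covers H H' a b ((S ∪ X) \ {x}) f) :
    ∃ g, IsStaged H H' a b S g ∧ f ⊆ g ∧ Covers H H' a b (S ∪ X) g := by
  by_cases hfT : Covers H H' a b (S ∪ X) f
  · exact ⟨f, hf, subset_rfl, hfT⟩
  have hcrown := hf.subset_crown_prod_crown (hC.pregeom H hH) (hC.pregeom H' hH') hX hfT
  obtain ⟨g, hg, hfg, hgT, hdom, himg⟩ := hC.exists_extension_of_crown_subset hH hH' ha hb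
    (hS.union X.finite_toSet.countable) (hS'.mono subset_union_left) hX subset_union_right
    hf.isPartialEmbedding (fun i _ ↦ hf.mem i)
    (union_subset (image_subset_iff.2 fun i _ ↦ mem_pdom.2 ⟨b i, hf.mem i⟩)
      (iUnion₂_subset fun x hx ↦ (hfX x hx).1))
    (image_subset_iff.2 fun z hz ↦ (hcrown hz).1)
    (union_subset (image_subset_iff.2 fun i _ ↦ mem_pimg.2 ⟨a i, hf.mem i⟩)
      (iUnion₂_subset fun x hx ↦ (hfX x hx).2))
    (image_subset_iff.2 fun z hz ↦ (hcrown hz).2)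
  exact ⟨g, hf.extend hg hfg hgT subset_union_left ⟨hdom, himg⟩, hfg, hdom, himg⟩

lemma covers_of_maximal (hf : Maximal (IsStaged H H' a b S) f) (hC : IsQMClass C) (hH : H ∈ C)
    (hH' : H' ∈ C) (ha : IndepOn H.cl a Set.univ) (hb : IndepOn H'.cl b Set.univ)
    (hS : S.Countable) (hS' : S.Infinite) (hfS : Covers H H' a b S f) (X : Finset ι) :
    Covers H H' a b (S ∪ X) f := by
  classical
  induction X using Finset.strongInduction with
  | H X ih =>
    rcases X.eq_empty_or_nonempty with rfl | hX
    · simpa using hfS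
    obtain ⟨g, hg, hfg, hgX⟩ := hf.prop.exists_covers hC hH hH' ha hb hS hS' hX fun x hx ↦
      (ih (X.erase x) (Finset.erase_ssubset hx)).anti (hC.pregeom H hH) (hC.pregeom H' hH') (by
        rw [union_sdiff_distrib, Finset.coe_erase]
        exact union_subset_union_left _ sdiff_subset)
    exact hgX.mono (hf.le_of_ge hg hfg)

end IsStaged

lemma IsPregeometry.eq_univ_of_forall_finset {α : Type*} {cl : Set α → Set α}
    (h : IsPregeometry cl) {u : ι → α} (hu : cl (u '' Set.univ) = Set.univ) {A : Set α}
    (hA : ∀ X : Finset ι, cl (u '' X) ⊆ A) : A = Set.univ := by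
  refine eq_univ_of_forall fun y ↦ ?_
  obtain ⟨D, -, hD, hyD⟩ :=
    h.exists_finite_subset u (finite_singleton y) (hu.symm.subset.trans' (subset_univ _))
  exact hA hD.toFinset (by simpa using hyD)

theorem IsQMClass.nonempty_equiv (hC : IsQMClass C) (hH : H ∈ C) (hH' : H' ∈ C)
    (ha : IndepOn H.cl a Set.univ) (hb : IndepOn H'.cl b Set.univ)
    (ha' : H.cl (a '' Set.univ) = Set.univ) (hb' : H'.cl (b '' Set.univ) = Set.univ) :
    Nonempty (H.carrier ≃[L] H'.carrier) := by
  have h := hC.pregeom H hH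
  have h' := hC.pregeom H' hH'
  rcases finite_or_infinite ι with hι | hι
  · obtain ⟨p, hp⟩ := hC.exists_isSpanIso hH hH' countable_univ ha hb
    exact hp.isPartialEmbedding.nonempty_equiv (hp.pdom_eq.trans ha') (hp.pimg_eq.trans hb')
  let e := Infinite.natEmbedding ι
  have hS : (range e).Infinite := infinite_range_of_injective e.injective
  obtain ⟨f₀, hf₀, hf₀S⟩ := hC.exists_isStaged hH hH' ha hb (countable_range e)
  obtain ⟨f, hf₀f, hf⟩ := hf₀.exists_maximal
  have hcov (X : Finset ι) : Covers H H' a b X f :=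
    (IsStaged.covers_of_maximal hf hC hH hH' ha hb (countable_range e) hS (hf₀S.mono hf₀f) X).anti
      h h' subset_union_right
  exact hf.prop.isPartialEmbedding.nonempty_equiv
    (h.eq_univ_of_forall_finset ha' fun X ↦ (hcov X).1)
    (h'.eq_univ_of_forall_finset hb' fun X ↦ (hcov X).2)

end Stages

section Bases

variable {C : Set (QMObj.{u} L)} {H H' : QMObj.{u} L}

lemma IsIndep.indepOn_val {B : Set H.carrier} (hB : IsIndep H B) :
    IndepOn H.cl ((↑) : B → H.carrier) Set.univ := by
  intro x _
  rw [image_sdiff Subtype.val_injective, image_univ, Subtype.range_coe, image_singleton]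
  exact hB x x.2

theorem IsBasis.nonempty_equiv (hC : IsQMClass C) (hH : H ∈ C) (hH' : H' ∈ C)
    {B : Set H.carrier} {B' : Set H'.carrier} (hB : IsBasis H B) (hB' : IsBasis H' B')
    (e : B ≃ B') : Nonempty (H.carrier ≃[L] H'.carrier) := by
  have h := hC.pregeom H hH
  have h' := hC.pregeom H' hH'
  refine hC.nonempty_equiv hH hH' (a := ((↑) : B → H.carrier)) (b := (↑) ∘ e)
    hB.1.indepOn_val (hB'.1.indepOn_val.comp h' e.injective.injOn (mapsTo_univ _ _)) ?_ ?_
  · simpa using hB.cl_eq_univ h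
  · rw [image_comp, image_univ, e.range_eq_univ, image_univ, Subtype.range_coe]
    exact hB'.cl_eq_univ h'

end Bases

/-- Any two structures in a quasiminimal pregeometry class of the same
uncountable cardinality are isomorphic as `L`-structures. -/
theorem statement_13 {L : FirstOrder.Language.{v, w}} (C : Set (QMObj.{u} L))
    (hC : IsQMClass C) (H : QMObj.{u} L) (hH : H ∈ C) (H' : QMObj.{u} L) (hH' : H' ∈ C)
    (hcard : Cardinal.mk H.carrier = Cardinal.mk H'.carrier)
    (hunc : Uncountable H.carrier) :
    Nonempty (H.carrier ≃[L] H'.carrier) := by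
  have h := hC.pregeom H hH
  have h' := hC.pregeom H' hH'
  have : Uncountable H'.carrier := by rwa [← aleph0_lt_mk_iff, ← hcard, aleph0_lt_mk_iff]
  obtain ⟨B, hB⟩ := exists_isBasis h
  obtain ⟨B', hB'⟩ := exists_isBasis h'
  have mk_bases : #B = #B' := by
    rw [hB.mk_eq h (hC.cl_finite_countable H hH), hcard,
      hB'.mk_eq h' (hC.cl_finite_countable H' hH')]
  obtain ⟨e⟩ := Cardinal.eq.1 mk_bases
  exact hB.nonempty_equiv hC hH hH' hB' e

end QM
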